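/- arXiv:2208.01989 — 7 statements merged into one kernel-verified Lean document; each statement's English description precedes it below -/
import Mathlib

section
/- Fix real numbers a₀ with 0 < a₀ < 1 and b ∈ ℝ. Set λ = (−15 + √(405 − 210·a₀ + 30·a₀²) + 30·b)/30 and f(x) = (b − 1 − λ)/(a₀ − 1) + x·(1 − x). Then f(x) > 0 for every x ∈ [0,1], and for every x ∈ [0,1] one has ∫₀¹ (f(y) − f(x))·P(x,y) dy + V(x)·f(x) = λ·f(x). (This exhibits an explicit eigenvalue and strictly positive quadratic eigenfunction for the operator L + V of Theorem 3.5.) -/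
open MeasureTheory intervalIntegral

/-!
Write `q t = t * (1 - t)`, so that `g = a₀ + 6 (1 - a₀) q`. Since `P x y` is `g` at `x + y` modulo
one and `q` is invariant under `t ↦ 1 - t`, integrating `q` against `P x` is a circular convolution
with `g`. Up to affine changes `q` is the Bernoulli polynomial `B₂`, and the convolution of `B₂`
with itself is a multiple of `B₄ = q ^ 2 - 1 / 30`. Hence `L q` is a quadratic polynomial in `q`,
and the coefficient of `q` in `V` is exactly the one for which the `q ^ 2` terms of `L q` and of
`V * (c + q)` cancel. Comparing the remaining coefficients with those of `lam * (c + q)` expresses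
`c` through `lam` and gives a quadratic equation for `lam`.
-/

open Set

/-- The kernel on the unit interval whose value at `(x, y)` is `g` at `x + y` reduced modulo one.
It is given by cases rather than by `Int.fract` so that its value at `(1, 1)` is `g 1`. -/
noncomputable def wrapKernel {E : Type*} (g : ℝ → E) (x y : ℝ) : E :=
  if x + y < 1 then g (x + y) else g (x + y - 1)

section WrapKernel

variable {E : Type*}

theorem wrapKernel_eqOn_Iio (g : ℝ → E) (x : ℝ) :
    EqOn (wrapKernel g x) (fun y ↦ g (x + y)) (Iio (1 - x)) :=
  fun _ hy ↦ if_pos (lt_sub_iff_add_lt'.1 hy)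

theorem wrapKernel_eqOn_Ici (g : ℝ → E) (x : ℝ) :
    EqOn (wrapKernel g x) (fun y ↦ g (x - 1 + y)) (Ici (1 - x)) := fun y hy ↦ by
  rw [wrapKernel, if_neg (sub_le_iff_le_add'.1 hy).not_gt, add_sub_right_comm]

theorem wrapKernel_comp {F : Type*} (h : E → F) (g : ℝ → E) (x y : ℝ) :
    wrapKernel (fun u ↦ h (g u)) x y = h (wrapKernel g x y) :=
  (apply_ite h _ _ _).symm

variable [NormedAddCommGroup E] {g : ℝ → E} {x : ℝ}

theorem intervalIntegrable_wrapKernel (hg : IntervalIntegrable g volume 0 1)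
    (hx : x ∈ Icc (0 : ℝ) 1) : IntervalIntegrable (wrapKernel g x) volume 0 1 := by
  obtain ⟨hx₀, hx₁⟩ := hx
  have left : IntervalIntegrable (fun y ↦ g (x + y)) volume 0 (1 - x) := by
    have h : IntervalIntegrable g volume x 1 := hg.mono_set (by grind [uIcc_of_le])
    simpa using h.comp_add_left x
  have right : IntervalIntegrable (fun y ↦ g (x - 1 + y)) volume (1 - x) 1 := by
    have h : IntervalIntegrable g volume 0 x := hg.mono_set (by grind [uIcc_of_le])
    simpa using h.comp_add_left (x - 1)
  refine (left.congr_uIoo fun y hy ↦ ?_).trans (right.congr_uIoo fun y hy ↦ ?_)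
  · exact (wrapKernel_eqOn_Iio g x (by grind [uIoo_of_le])).symm
  · exact (wrapKernel_eqOn_Ici g x (by grind [uIoo_of_le])).symm

variable [NormedSpace ℝ E]

theorem integral_smul_wrapKernel {φ : ℝ → ℝ} (hφ : ContinuousOn φ (Icc 0 1))
    (hg : IntervalIntegrable g volume 0 1) (hx : x ∈ Icc (0 : ℝ) 1) :
    ∫ y in 0..1, φ y • wrapKernel g x y =
      (∫ u in 0..x, φ (u - x + 1) • g u) + ∫ u in x..1, φ (u - x) • g u := by
  have hint : IntervalIntegrable (fun y ↦ φ y • wrapKernel g x y) volume 0 1 :=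
    (intervalIntegrable_wrapKernel hg hx).continuousOn_smul (by rwa [uIcc_of_le zero_le_one])
  obtain ⟨hx₀, hx₁⟩ := hx
  have left : ∫ y in 0..1 - x, φ y • wrapKernel g x y = ∫ u in x..1, φ (u - x) • g u := by
    calc ∫ y in 0..1 - x, φ y • wrapKernel g x y
      _ = ∫ y in 0..1 - x, φ (x + y - x) • g (x + y) :=
        integral_congr_Ioo_of_le (by linarith) fun y hy ↦ by
          simp [wrapKernel_eqOn_Iio g x hy.2]
      _ = ∫ u in x..1, φ (u - x) • g u := by
        simpa using integral_comp_add_left (a := 0) (b := 1 - x) (fun u ↦ φ (u - x) • g u) x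
  have right : ∫ y in 1 - x..1, φ y • wrapKernel g x y = ∫ u in 0..x, φ (u - x + 1) • g u := by
    calc ∫ y in 1 - x..1, φ y • wrapKernel g x y
      _ = ∫ y in 1 - x..1, φ (x - 1 + y - x + 1) • g (x - 1 + y) :=
        integral_congr_Ioo_of_le (by linarith) fun y hy ↦ by
          have hy' : x - 1 + y - x + 1 = y := by ring
          simp [wrapKernel_eqOn_Ici g x hy.1.le, hy']
      _ = ∫ u in 0..x, φ (u - x + 1) • g u := by
        simpa using
          integral_comp_add_left (a := 1 - x) (b := 1) (fun u ↦ φ (u - x + 1) • g u) (x - 1)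
  rw [← left, ← right, add_comm, integral_add_adjacent_intervals] <;>
    exact hint.mono_set (by grind [uIcc_of_le])

theorem integral_wrapKernel (hg : IntervalIntegrable g volume 0 1) (hx : x ∈ Icc (0 : ℝ) 1) :
    ∫ y in 0..1, wrapKernel g x y = ∫ u in 0..1, g u := by
  have h := integral_smul_wrapKernel (φ := fun _ ↦ (1 : ℝ)) continuousOn_const hg hx
  simp only [one_smul] at h
  rw [h, integral_add_adjacent_intervals] <;> exact hg.mono_set (by grind [uIcc_of_le])

end WrapKernel

theorem integral_sum_mul_pow {n : ℕ} (c : Fin n → ℝ) (a b : ℝ) :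
    ∫ u in a..b, ∑ i, c i * u ^ (i : ℕ) =
      ∑ i : Fin n, c i * ((b ^ (i + 1 : ℕ) - a ^ (i + 1 : ℕ)) / (i + 1)) := by
  rw [integral_finsetSum fun i _ ↦ Continuous.intervalIntegrable (by fun_prop) a b]
  simp only [intervalIntegral.integral_const_mul, integral_pow]

theorem integral_quartic (c₀ c₁ c₂ c₃ c₄ a b : ℝ) :
    ∫ u in a..b, (c₀ + c₁ * u + c₂ * u ^ 2 + c₃ * u ^ 3 + c₄ * u ^ 4) =
      c₀ * (b - a) + c₁ * ((b ^ 2 - a ^ 2) / 2) + c₂ * ((b ^ 3 - a ^ 3) / 3) +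
        c₃ * ((b ^ 4 - a ^ 4) / 4) + c₄ * ((b ^ 5 - a ^ 5) / 5) := by
  convert integral_sum_mul_pow ![c₀, c₁, c₂, c₃, c₄] a b using 3 <;>
    norm_num [Fin.sum_univ_succ, add_assoc]

section Parabola

/-- The symmetric parabola vanishing at both ends of the unit interval; up to affine changes it is
the second Bernoulli polynomial. -/
def parabola (t : ℝ) : ℝ := t * (1 - t)

@[fun_prop]
theorem continuous_parabola : Continuous parabola := by
  unfold parabola
  fun_prop

theorem parabola_nonneg {t : ℝ} (ht : t ∈ Icc (0 : ℝ) 1) : 0 ≤ parabola t :=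
  mul_nonneg ht.1 (sub_nonneg.2 ht.2)

theorem parabola_add_one (t : ℝ) : parabola (t + 1) = parabola t - 2 * t := by
  unfold parabola
  ring

theorem integral_parabola : ∫ t in 0..1, parabola t = 1 / 6 := by
  have h (t : ℝ) : parabola t = 0 + 1 * t + -1 * t ^ 2 + 0 * t ^ 3 + 0 * t ^ 4 := by
    unfold parabola
    ring
  simp only [h, integral_quartic]
  norm_num

theorem integral_parabola_sub_mul_parabola (x : ℝ) :
    ∫ u in 0..1, parabola (u - x) * parabola u = 1 / 30 - x ^ 2 / 6 := by
  have h (u : ℝ) : parabola (u - x) * parabola u = 0 + (-x - x ^ 2) * u +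
      (1 + 3 * x + x ^ 2) * u ^ 2 + (-2 - 2 * x) * u ^ 3 + 1 * u ^ 4 := by
    unfold parabola
    ring
  simp only [h, integral_quartic]
  ring

theorem integral_sub_mul_parabola (x : ℝ) :
    ∫ u in 0..x, (u - x) * parabola u = x ^ 4 / 12 - x ^ 3 / 6 := by
  have h (u : ℝ) : (u - x) * parabola u =
      0 + -x * u + (1 + x) * u ^ 2 + -1 * u ^ 3 + 0 * u ^ 4 := by
    unfold parabola
    ring
  simp only [h, integral_quartic]
  ring

variable {x : ℝ}

theorem integral_parabola_mul_wrapKernel_parabola (hx : x ∈ Icc (0 : ℝ) 1) :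
    ∫ y in 0..1, parabola y * wrapKernel parabola x y = 1 / 30 - parabola x ^ 2 / 6 := by
  calc ∫ y in 0..1, parabola y * wrapKernel parabola x y
    _ = (∫ u in 0..x, (parabola (u - x) * parabola u - 2 * ((u - x) * parabola u))) +
          ∫ u in x..1, parabola (u - x) * parabola u := by
      simpa only [smul_eq_mul, parabola_add_one, sub_mul, mul_assoc] using
        integral_smul_wrapKernel continuous_parabola.continuousOn
          (continuous_parabola.intervalIntegrable 0 1) hx
    _ = (∫ u in 0..1, parabola (u - x) * parabola u) - 2 * ∫ u in 0..x, (u - x) * parabola u := by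
      have hint (a b : ℝ) : IntervalIntegrable (fun u ↦ parabola (u - x) * parabola u) volume a b :=
        Continuous.intervalIntegrable (by fun_prop) a b
      rw [integral_sub (hint 0 x) (Continuous.intervalIntegrable (by fun_prop) 0 x),
        intervalIntegral.integral_const_mul,
        ← integral_add_adjacent_intervals (hint 0 x) (hint x 1)]
      ring
    _ = 1 / 30 - parabola x ^ 2 / 6 := by
      rw [integral_parabola_sub_mul_parabola, integral_sub_mul_parabola, parabola]
      ring

theorem integral_parabola_sub_parabola_mul_wrapKernel (α β : ℝ) (hx : x ∈ Icc (0 : ℝ) 1) :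
    ∫ y in 0..1, (parabola y - parabola x) * wrapKernel (fun u ↦ α + β * parabola u) x y =
      α / 6 + β / 30 - (α + β / 6) * parabola x - β / 6 * parabola x ^ 2 := by
  have hq : IntervalIntegrable parabola volume 0 1 := continuous_parabola.intervalIntegrable 0 1
  have hW : IntervalIntegrable (wrapKernel parabola x) volume 0 1 :=
    intervalIntegrable_wrapKernel hq hx
  have hqW : IntervalIntegrable (fun y ↦ parabola y * wrapKernel parabola x y) volume 0 1 :=
    hW.continuousOn_mul continuous_parabola.continuousOn
  calc ∫ y in 0..1, (parabola y - parabola x) * wrapKernel (fun u ↦ α + β * parabola u) x y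
    _ = ∫ y in 0..1, (α * (parabola y - parabola x) +
          β * (parabola y * wrapKernel parabola x y - parabola x * wrapKernel parabola x y)) := by
      simp only [wrapKernel_comp fun t ↦ α + β * t]
      congr! 2 with y
      ring
    _ = α * ((∫ y in 0..1, parabola y) - parabola x) +
          β * ((∫ y in 0..1, parabola y * wrapKernel parabola x y) -
            parabola x * ∫ y in 0..1, wrapKernel parabola x y) := by
      rw [integral_add ((hq.sub intervalIntegrable_const).const_mul α)
          ((hqW.sub (hW.const_mul (parabola x))).const_mul β),
        intervalIntegral.integral_const_mul, intervalIntegral.integral_const_mul,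
        integral_sub hq intervalIntegrable_const, integral_sub hqW (hW.const_mul (parabola x)),
        intervalIntegral.integral_const_mul, intervalIntegral.integral_const]
      simp
    _ = α / 6 + β / 30 - (α + β / 6) * parabola x - β / 6 * parabola x ^ 2 := by
      rw [integral_wrapKernel hq hx, integral_parabola,
        integral_parabola_mul_wrapKernel_parabola hx]
      ring

theorem integral_sub_mul_wrapKernel_add_potential_mul {α β b c lam : ℝ}
    (hlam : lam = b - (α + β / 6) + β / 6 * c) (hc : c * (lam - b) = α / 6 + β / 30)
    (hx : x ∈ Icc (0 : ℝ) 1) :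
    (∫ y in 0..1, ((c + parabola y) - (c + parabola x)) *
        wrapKernel (fun u ↦ α + β * parabola u) x y) +
      (b + β / 6 * parabola x) * (c + parabola x) = lam * (c + parabola x) := by
  simp only [add_sub_add_left_eq_sub]
  rw [integral_parabola_sub_parabola_mul_wrapKernel α β hx]
  linear_combination -parabola x * hlam - hc

end Parabola

theorem eigenvalue_discriminant_pos (a : ℝ) : 0 < 405 - 210 * a + 30 * a ^ 2 := by
  linarith [sq_nonneg (2 * a - 7)]

theorem eigenvalue_quadratic {a b lam : ℝ}
    (hlam : lam = (-15 + √(405 - 210 * a + 30 * a ^ 2) + 30 * b) / 30) :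
    (lam - b) * (lam - b + 1) = (1 - a) * (6 - a) / 30 := by
  have hS := Real.sq_sqrt (eigenvalue_discriminant_pos a).le
  rw [hlam]
  linear_combination hS / 900

theorem eigenfunction_const_mul {a b c lam : ℝ} (ha : a ≠ 1)
    (hlam : (lam - b) * (lam - b + 1) = (1 - a) * (6 - a) / 30)
    (hc : c * (a - 1) = b - 1 - lam) : c * (lam - b) = (6 - a) / 30 := by
  apply mul_right_cancel₀ (sub_ne_zero.2 ha)
  linear_combination (lam - b) * hc - hlam

theorem eigenfunction_const_pos {a b lam : ℝ} (ha : a < 1)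
    (hlam : lam = (-15 + √(405 - 210 * a + 30 * a ^ 2) + 30 * b) / 30) :
    0 < (b - 1 - lam) / (a - 1) := by
  have hnum : b - 1 - lam < 0 := by linarith [Real.sqrt_nonneg (405 - 210 * a + 30 * a ^ 2)]
  exact div_pos_of_neg_of_neg hnum (sub_neg.2 ha)

theorem explicit_eigenfunction_degree_two_general {a₀ b lam : ℝ} {g f : ℝ → ℝ} {P : ℝ → ℝ → ℝ}
    {V : ℝ → ℝ} (ha : a₀ ≠ 1)
    (hlam : lam = (-15 + √(405 - 210 * a₀ + 30 * a₀ ^ 2) + 30 * b) / 30)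
    (hg : g = fun x ↦ a₀ + 6 * (1 - a₀) * x * (1 - x)) (hP : P = wrapKernel g)
    (hV : V = fun x ↦ b + (1 - a₀) * x * (1 - x))
    (hf : f = fun x ↦ (b - 1 - lam) / (a₀ - 1) + x * (1 - x)) :
    (a₀ < 1 → ∀ x ∈ Icc (0 : ℝ) 1, 0 < f x) ∧
      ∀ x ∈ Icc (0 : ℝ) 1, (∫ y in (0 : ℝ)..1, (f y - f x) * P x y) + V x * f x = lam * f x := by
  have hc : (b - 1 - lam) / (a₀ - 1) * (a₀ - 1) = b - 1 - lam :=
    div_mul_cancel₀ _ (sub_ne_zero.2 ha)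
  have hg' : g = fun u ↦ a₀ + 6 * (1 - a₀) * parabola u := by
    simp only [hg, parabola, mul_assoc]
  have hV' (x : ℝ) : V x = b + 6 * (1 - a₀) / 6 * parabola x := by
    simp only [hV, parabola]
    ring
  have hf' (x : ℝ) : f x = (b - 1 - lam) / (a₀ - 1) + parabola x := congrFun hf x
  simp only [hP, hg', hV', hf']
  refine ⟨fun h1 x hx ↦ ?_, fun x hx ↦ integral_sub_mul_wrapKernel_add_potential_mul ?_ ?_ hx⟩
  · exact add_pos_of_pos_of_nonneg (eigenfunction_const_pos h1 hlam) (parabola_nonneg hx)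
  · linear_combination hc
  · linear_combination eigenfunction_const_mul ha (eigenvalue_quadratic hlam) hc

/-- Theorem 3.5 of the paper: explicit eigenvalue and strictly positive quadratic
eigenfunction for `L + V`, where `L` has kernel `P` built from the degree-two
polynomial `g` and `V(x) = b + (1 − a₀)·x·(1 − x)`. -/
theorem explicit_eigenfunction_degree_two (a₀ b : ℝ) (h0 : 0 < a₀) (h1 : a₀ < 1) :
    ∀ (lam : ℝ) (g f : ℝ → ℝ) (P : ℝ → ℝ → ℝ) (V : ℝ → ℝ),
      lam = (-15 + Real.sqrt (405 - 210 * a₀ + 30 * a₀ ^ 2) + 30 * b) / 30 →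
      g = (fun x : ℝ => a₀ + 6 * (1 - a₀) * x * (1 - x)) →
      P = (fun x y : ℝ => if x + y < 1 then g (x + y) else g (x + y - 1)) →
      V = (fun x : ℝ => b + (1 - a₀) * x * (1 - x)) →
      f = (fun x : ℝ => (b - 1 - lam) / (a₀ - 1) + x * (1 - x)) →
      (∀ x ∈ Set.Icc (0:ℝ) 1, 0 < f x) ∧
      (∀ x ∈ Set.Icc (0:ℝ) 1,
        (∫ y in (0:ℝ)..1, (f y - f x) * P x y) + V x * f x = lam * f x) := by
  intro lam g f P V hlam hg hP hV hf
  exact (explicit_eigenfunction_degree_two_general h1.ne hlam hg hP hV hf).imp_left (· h1)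
end

section
/- For every continuous f : [0,1] → ℝ, ∫₀¹ (𝓛̃ f)(x)·φ(x)·ℓ̃(x) dx = 0. Hence the probability measure on [0,1] whose density is proportional to φ·ℓ̃ is invariant for the generator 𝓛̃ (Theorem 4.1). -/
open MeasureTheory intervalIntegral

/-- `γ̃(x) = ∫₀¹ (φ(y)/φ(x))·P(x,y) dy`. -/
noncomputable def gammaTilde (P : ℝ → ℝ → ℝ) (phi : ℝ → ℝ) (x : ℝ) : ℝ :=
  ∫ y in (0:ℝ)..1, (phi y / phi x) * P x y

/-- The generator `(𝓛̃ f)(x) = ∫₀¹ (f(y) − f(x))·(φ(y)/φ(x))·P(x,y) dy`. -/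
noncomputable def Ltilde (P : ℝ → ℝ → ℝ) (phi : ℝ → ℝ) (f : ℝ → ℝ) (x : ℝ) : ℝ :=
  ∫ y in (0:ℝ)..1, (f y - f x) * ((phi y / phi x) * P x y)

/- A density `m` is invariant for a jump generator with rates `q` as soon as the flux into almost
every `x` balances the flux out of it: weighting by `f x` and integrating, the gain and loss terms
become the two iterated integrals of `f y * q x y * m x`, which agree by Fubini. For the rates
`φ(y)/φ(x) * P x y` and `m = φ * ℓ̃`, the factor `φ(y)` cancels in the flux from `y` into `x`, so
the balance equation is `φ(x)` times the equation satisfied by `ℓ̃`. -/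

section JumpGenerator

variable {α : Type*} [MeasurableSpace α] {μ : Measure α} {q : α → α → ℝ} {f m h ℓ : α → ℝ}

/-- The generator of the pure jump process which jumps from `x` into `dy` at rate `q x y ∂μ(y)`. -/
noncomputable def jumpGenerator (μ : Measure α) (q : α → α → ℝ) (f : α → ℝ) (x : α) : ℝ :=
  ∫ y, (f y - f x) * q x y ∂μ

/-- The global balance equation for a density `m` with respect to `μ` and jump rates `q`: the flux
into `x` equals the flux out of `x`, for almost every `x`. Both `q` and `m` may be signed. -/
def GlobalBalance (μ : Measure α) (q : α → α → ℝ) (m : α → ℝ) : Prop :=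
  ∀ᵐ x ∂μ, ∫ y, m y * q y x ∂μ = (∫ y, q x y ∂μ) * m x

/-- Doob's `h`-transform of the jump rates `q`. -/
noncomputable def doobTransform (h : α → ℝ) (q : α → α → ℝ) (x y : α) : ℝ :=
  h y / h x * q x y

theorem jumpGenerator_mul_eq_gain_sub_loss {x : α}
    (hbal : ∫ y, m y * q y x ∂μ = (∫ y, q x y ∂μ) * m x)
    (hq : Integrable (q x) μ) (hfq : Integrable (fun y ↦ f y * (q x y * m x)) μ) :
    jumpGenerator μ q f x * m x =
      (∫ y, f y * (q x y * m x) ∂μ) - ∫ y, f x * (q y x * m y) ∂μ := by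
  have loss : ∫ y, f x * (q y x * m y) ∂μ = ∫ y, f x * m x * q x y ∂μ := by
    simp only [MeasureTheory.integral_const_mul, mul_comm (q _ x), hbal]
    ring
  rw [loss, ← MeasureTheory.integral_sub hfq (hq.const_mul _), jumpGenerator,
    ← MeasureTheory.integral_mul_const]
  congr with y
  ring

theorem GlobalBalance.integral_jumpGenerator_mul_eq_zero [SFinite μ] (hbal : GlobalBalance μ q m)
    (hq : ∀ᵐ x ∂μ, Integrable (q x) μ)
    (hfq : Integrable (fun p : α × α ↦ f p.2 * (q p.1 p.2 * m p.1)) (μ.prod μ)) :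
    ∫ x, jumpGenerator μ q f x * m x ∂μ = 0 := by
  have gain_sub_loss : ∀ᵐ x ∂μ, jumpGenerator μ q f x * m x =
      (∫ y, f y * (q x y * m x) ∂μ) - ∫ y, f x * (q y x * m y) ∂μ := by
    filter_upwards [hbal, hq, hfq.prod_right_ae] with x hbal_x hq_x hfq_x
    exact jumpGenerator_mul_eq_gain_sub_loss hbal_x hq_x hfq_x
  calc ∫ x, jumpGenerator μ q f x * m x ∂μ
      = ∫ x, ((∫ y, f y * (q x y * m x) ∂μ) - ∫ y, f x * (q y x * m y) ∂μ) ∂μ :=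
        integral_congr_ae gain_sub_loss
    _ = (∫ x, ∫ y, f y * (q x y * m x) ∂μ ∂μ) - ∫ x, ∫ y, f x * (q y x * m y) ∂μ ∂μ :=
        MeasureTheory.integral_sub hfq.integral_prod_left hfq.integral_prod_right
    _ = 0 := sub_eq_zero.2 (integral_integral_swap hfq)

theorem globalBalance_doobTransform (hh : ∀ᵐ x ∂μ, h x ≠ 0)
    (hℓ : ∀ᵐ x ∂μ, ∫ y, ℓ y * q y x ∂μ = (∫ y, doobTransform h q x y ∂μ) * ℓ x) :
    GlobalBalance μ (doobTransform h q) (fun x ↦ h x * ℓ x) := by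
  filter_upwards [hℓ] with x hℓ_x
  calc ∫ y, h y * ℓ y * doobTransform h q y x ∂μ
      = ∫ y, h x * (ℓ y * q y x) ∂μ := by
        refine integral_congr_ae ?_
        filter_upwards [hh] with y hy
        rw [doobTransform]
        field_simp
    _ = (∫ y, doobTransform h q x y ∂μ) * (h x * ℓ x) := by
        rw [MeasureTheory.integral_const_mul, hℓ_x]
        ring

theorem integral_jumpGenerator_doobTransform_mul_eq_zero [SFinite μ] (hh : ∀ᵐ x ∂μ, h x ≠ 0)
    (hq : ∀ᵐ x ∂μ, Integrable (fun y ↦ h y * q x y) μ)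
    (hℓ : ∀ᵐ x ∂μ, ∫ y, ℓ y * q y x ∂μ = (∫ y, doobTransform h q x y ∂μ) * ℓ x)
    (hfq : Integrable (fun p : α × α ↦ ℓ p.1 * q p.1 p.2 * (f p.2 * h p.2)) (μ.prod μ)) :
    ∫ x, jumpGenerator μ (doobTransform h q) f x * (h x * ℓ x) ∂μ = 0 := by
  refine (globalBalance_doobTransform hh hℓ).integral_jumpGenerator_mul_eq_zero ?_ (hfq.congr ?_)
  · filter_upwards [hq] with x hq_x
    refine (hq_x.const_mul (h x)⁻¹).congr (.of_forall fun y ↦ ?_)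
    simp only [doobTransform]
    ring
  · filter_upwards [Measure.quasiMeasurePreserving_fst.ae hh] with p hp
    simp only [doobTransform]
    field_simp

end JumpGenerator

theorem intervalIntegral_eq_integral_Icc {E : Type*} [NormedAddCommGroup E] [NormedSpace ℝ E]
    {μ : Measure ℝ} [NullSingletonClass μ] {a b : ℝ} (hab : a ≤ b) (g : ℝ → E) :
    ∫ x in a..b, g x ∂μ = ∫ x in Set.Icc a b, g x ∂μ := by
  rw [integral_of_le hab, integral_Icc_eq_integral_Ioc]

theorem gammaTilde_eq_integral_doobTransform (P : ℝ → ℝ → ℝ) (phi : ℝ → ℝ) (x : ℝ) :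
    gammaTilde P phi x = ∫ y in Set.Icc (0 : ℝ) 1, doobTransform phi P x y :=
  intervalIntegral_eq_integral_Icc zero_le_one _

theorem Ltilde_eq_jumpGenerator (P : ℝ → ℝ → ℝ) (phi f : ℝ → ℝ) (x : ℝ) :
    Ltilde P phi f x =
      jumpGenerator (volume.restrict (Set.Icc 0 1)) (doobTransform phi P) f x :=
  intervalIntegral_eq_integral_Icc zero_le_one _

theorem continuousOn_mul_kernel_mul {X Y : Type*} [TopologicalSpace X] [TopologicalSpace Y]
    {s : Set X} {t : Set Y} {u : X → ℝ} {K : X → Y → ℝ} {v : Y → ℝ} (hu : ContinuousOn u s)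
    (hK : ContinuousOn (fun p : X × Y ↦ K p.1 p.2) (s ×ˢ t)) (hv : ContinuousOn v t) :
    ContinuousOn (fun p : X × Y ↦ u p.1 * K p.1 p.2 * v p.2) (s ×ˢ t) :=
  ((hu.comp continuousOn_fst fun _ hp ↦ hp.1).mul hK).mul
    (hv.comp continuousOn_snd fun _ hp ↦ hp.2)

theorem invariant_density_Ltilde_general {P : ℝ → ℝ → ℝ} {phi ltilde f : ℝ → ℝ}
    (hphi : ∀ᵐ x ∂volume.restrict (Set.Icc (0 : ℝ) 1), phi x ≠ 0)
    (hrate : ∀ᵐ x ∂volume.restrict (Set.Icc (0 : ℝ) 1),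
      IntegrableOn (fun y ↦ phi y * P x y) (Set.Icc 0 1))
    (heig : ∀ᵐ x ∂volume.restrict (Set.Icc (0 : ℝ) 1),
      ∫ y in (0 : ℝ)..1, ltilde y * P y x = gammaTilde P phi x * ltilde x)
    (hflux : IntegrableOn (fun p : ℝ × ℝ ↦ ltilde p.1 * P p.1 p.2 * (f p.2 * phi p.2))
      (Set.Icc 0 1 ×ˢ Set.Icc 0 1)) :
    ∫ x in (0 : ℝ)..1, Ltilde P phi f x * (phi x * ltilde x) = 0 := by
  simp only [intervalIntegral_eq_integral_Icc zero_le_one,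
    gammaTilde_eq_integral_doobTransform, Ltilde_eq_jumpGenerator] at heig ⊢
  refine integral_jumpGenerator_doobTransform_mul_eq_zero hphi hrate heig ?_
  rwa [Measure.prod_restrict]

/-- Theorem 4.1 of the paper: the density proportional to `φ·ℓ̃` is invariant for the
generator `𝓛̃`, i.e. `∫₀¹ (𝓛̃ f)(x)·φ(x)·ℓ̃(x) dx = 0` for every continuous `f`. -/
theorem invariant_density_Ltilde
    (P : ℝ → ℝ → ℝ)
    (hP : ContinuousOn (fun p : ℝ × ℝ => P p.1 p.2) (Set.Icc 0 1 ×ˢ Set.Icc 0 1))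
    (phi : ℝ → ℝ) (hphi : ContinuousOn phi (Set.Icc 0 1))
    (hphipos : ∀ x ∈ Set.Icc (0:ℝ) 1, 0 < phi x)
    (ltilde : ℝ → ℝ) (hltilde : ContinuousOn ltilde (Set.Icc 0 1))
    (heig : ∀ x ∈ Set.Icc (0:ℝ) 1,
      ∫ y in (0:ℝ)..1, ltilde y * P y x = gammaTilde P phi x * ltilde x)
    (f : ℝ → ℝ) (hf : ContinuousOn f (Set.Icc 0 1)) :
    ∫ x in (0:ℝ)..1, Ltilde P phi f x * (phi x * ltilde x) = 0 :=
  invariant_density_Ltilde_general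
    (ae_restrict_of_forall_mem measurableSet_Icc fun x hx ↦ (hphipos x hx).ne')
    (ae_restrict_of_forall_mem measurableSet_Icc fun x hx ↦
      (hphi.mul (hP.uncurry_left x hx)).integrableOn_Icc)
    (ae_restrict_of_forall_mem measurableSet_Icc heig)
    ((continuousOn_mul_kernel_mul hltilde hP (hf.mul hphi)).integrableOn_compact
      (isCompact_Icc.prod isCompact_Icc))
end

section
/- The entropy production rate is nonnegative: ∫₀¹ ∫₀¹ log( P(x,y) / P(y,x) )·P(x,y)·θ(x) dy dx ≥ 0. -/
open MeasureTheory intervalIntegral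

/-!
Let `J (x, y) = θ x * P x y` be the stationary flux, and let `Jᵀ` be its transpose. Up to the
potential difference `log (θ x) - log (θ y)`, the logarithm of `P x y / P y x` is that of `J / Jᵀ`.
Stationarity says that the two marginals of `J` agree, so the potential difference integrates to
zero against `J`. What remains is the relative entropy of `J` with respect to `Jᵀ`, which have the
same total mass, so it is nonnegative by Gibbs' inequality.
-/

theorem sub_le_mul_log_div {a b : ℝ} (ha : 0 ≤ a) (hb : 0 < b) : a - b ≤ a * Real.log (a / b) := by
  have h_kl : 0 ≤ b * InformationTheory.klFun (a / b) :=
    mul_nonneg hb.le (InformationTheory.klFun_nonneg (div_nonneg ha hb.le))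
  have h_expand : b * InformationTheory.klFun (a / b) = a * Real.log (a / b) + b - a := by
    rw [InformationTheory.klFun_apply]
    field_simp
  linarith

section Integral

variable {X : Type*} [MeasurableSpace X] {μ : Measure X}

theorem integral_mul_log_div_nonneg {f g : X → ℝ} (hf : Integrable f μ) (hg : Integrable g μ)
    (hfg : Integrable (fun x => f x * Real.log (f x / g x)) μ) (hf_nonneg : ∀ᵐ x ∂μ, 0 ≤ f x)
    (hg_pos : ∀ᵐ x ∂μ, 0 < g x) (h_mass : ∫ x, g x ∂μ ≤ ∫ x, f x ∂μ) :
    0 ≤ ∫ x, f x * Real.log (f x / g x) ∂μ :=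
  calc
    0 ≤ ∫ x, f x ∂μ - ∫ x, g x ∂μ := sub_nonneg.mpr h_mass
    _ = ∫ x, (f x - g x) ∂μ := (MeasureTheory.integral_sub hf hg).symm
    _ ≤ ∫ x, f x * Real.log (f x / g x) ∂μ := by
      refine integral_mono_ae (hf.sub hg) hfg ?_
      filter_upwards [hf_nonneg, hg_pos] with x hfx hgx using sub_le_mul_log_div hfx hgx

variable [SFinite μ] {J : X × X → ℝ}

theorem integral_mul_log_div_swap_nonneg (hJ : Integrable J (μ.prod μ))
    (hJ_log : Integrable (fun z => J z * Real.log (J z / J z.swap)) (μ.prod μ))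
    (hJ_pos : ∀ᵐ z ∂μ.prod μ, 0 < J z) :
    0 ≤ ∫ z, J z * Real.log (J z / J z.swap) ∂μ.prod μ :=
  integral_mul_log_div_nonneg hJ hJ.swap hJ_log (hJ_pos.mono fun _ hz => hz.le)
    (Measure.measurePreserving_swap.quasiMeasurePreserving.ae hJ_pos) (integral_prod_swap J).le

theorem integral_mul_sub_eq_zero_of_marginals_eq {h : X → ℝ}
    (h_fst : Integrable (fun z => J z * h z.1) (μ.prod μ))
    (h_snd : Integrable (fun z => J z * h z.2) (μ.prod μ))
    (h_marginals : ∀ᵐ x ∂μ, ∫ y, J (x, y) ∂μ = ∫ y, J (y, x) ∂μ) :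
    ∫ z, J z * (h z.1 - h z.2) ∂μ.prod μ = 0 := by
  have h_swap : ∫ z, J z * h z.1 ∂μ.prod μ = ∫ z, J z * h z.2 ∂μ.prod μ := by
    rw [integral_prod _ h_fst, integral_prod_symm _ h_snd]
    simp only [MeasureTheory.integral_mul_const]
    exact MeasureTheory.integral_congr_ae (h_marginals.mono fun x hx => congrArg (· * h x) hx)
  simp only [mul_sub]
  rw [MeasureTheory.integral_sub h_fst h_snd, h_swap, sub_self]

end Integral

section Flux

variable {X : Type*}

/-- The flux `θ x * P x y` from `x` to `y`, as a function of the pair `(x, y)`, of a Markov process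
with density `θ` and transition density (or jump rate) `P`. Stationarity of `θ` says that the flux
out of each point equals the flux into it. -/
def flux (θ : X → ℝ) (P : X → X → ℝ) (z : X × X) : ℝ :=
  θ z.1 * P z.1 z.2

theorem log_flux_div_flux_swap {θ : X → ℝ} {P : X → X → ℝ} {x y : X} (hθx : θ x ≠ 0)
    (hθy : θ y ≠ 0) (hPxy : P x y ≠ 0) (hPyx : P y x ≠ 0) :
    Real.log (flux θ P (x, y) / flux θ P (y, x)) =
      Real.log (P x y / P y x) + (Real.log (θ x) - Real.log (θ y)) := by
  simp only [flux]
  rw [mul_div_mul_comm, Real.log_mul (div_ne_zero hθx hθy) (div_ne_zero hPxy hPyx),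
    Real.log_div hθx hθy, add_comm]

theorem integral_flux_mul_log_div_nonneg [MeasurableSpace X] {μ : Measure X} [SFinite μ]
    {θ : X → ℝ} {P : X → X → ℝ} (hJ : Integrable (flux θ P) (μ.prod μ))
    (hJ_log : Integrable (fun z => flux θ P z * Real.log (P z.1 z.2 / P z.2 z.1)) (μ.prod μ))
    (h_fst : Integrable (fun z => flux θ P z * Real.log (θ z.1)) (μ.prod μ))
    (h_snd : Integrable (fun z => flux θ P z * Real.log (θ z.2)) (μ.prod μ))
    (hθ_pos : ∀ᵐ x ∂μ, 0 < θ x) (hP_pos : ∀ᵐ z ∂μ.prod μ, 0 < P z.1 z.2)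
    (h_stationary : ∀ᵐ x ∂μ, ∫ y, flux θ P (x, y) ∂μ = ∫ y, flux θ P (y, x) ∂μ) :
    0 ≤ ∫ z, flux θ P z * Real.log (P z.1 z.2 / P z.2 z.1) ∂μ.prod μ := by
  have hθ_fst : ∀ᵐ z ∂μ.prod μ, 0 < θ z.1 := Measure.quasiMeasurePreserving_fst.ae hθ_pos
  have hθ_snd : ∀ᵐ z ∂μ.prod μ, 0 < θ z.2 := Measure.quasiMeasurePreserving_snd.ae hθ_pos
  have hP_swap : ∀ᵐ z ∂μ.prod μ, 0 < P z.2 z.1 :=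
    Measure.measurePreserving_swap.quasiMeasurePreserving.ae hP_pos
  have hJ_pos : ∀ᵐ z ∂μ.prod μ, 0 < flux θ P z := by
    filter_upwards [hθ_fst, hP_pos] with z hθz hPz using mul_pos hθz hPz
  have h_potential :
      Integrable (fun z => flux θ P z * (Real.log (θ z.1) - Real.log (θ z.2))) (μ.prod μ) := by
    simp only [mul_sub]
    exact h_fst.sub h_snd
  have h_split : (fun z => flux θ P z * Real.log (flux θ P z / flux θ P z.swap)) =ᵐ[μ.prod μ]
      fun z => flux θ P z * Real.log (P z.1 z.2 / P z.2 z.1) +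
        flux θ P z * (Real.log (θ z.1) - Real.log (θ z.2)) := by
    filter_upwards [hθ_fst, hθ_snd, hP_pos, hP_swap] with z h₁ h₂ h₃ h₄
    rw [← mul_add, ← log_flux_div_flux_swap h₁.ne' h₂.ne' h₃.ne' h₄.ne', Prod.swap]
  calc
    0 ≤ ∫ z, flux θ P z * Real.log (flux θ P z / flux θ P z.swap) ∂μ.prod μ :=
      integral_mul_log_div_swap_nonneg hJ ((hJ_log.add h_potential).congr h_split.symm) hJ_pos
    _ = ∫ z, flux θ P z * Real.log (P z.1 z.2 / P z.2 z.1) ∂μ.prod μ := by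
      rw [MeasureTheory.integral_congr_ae h_split, MeasureTheory.integral_add hJ_log h_potential,
        integral_mul_sub_eq_zero_of_marginals_eq (h := fun x => Real.log (θ x)) h_fst h_snd
          h_stationary, add_zero]

end Flux

section Compact

variable {X : Type*} [TopologicalSpace X] [T2Space X] [SecondCountableTopology X]
  [MeasurableSpace X] [OpensMeasurableSpace X] {μ : Measure X} [SFinite μ]
  [IsFiniteMeasureOnCompacts μ] {s : Set X}

theorem integrable_prod_restrict_of_continuousOn (hs : IsCompact s) {f : X × X → ℝ}
    (hf : ContinuousOn f (s ×ˢ s)) : Integrable f ((μ.restrict s).prod (μ.restrict s)) := by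
  rw [Measure.prod_restrict]
  exact hf.integrableOn_compact (hs.prod hs)

theorem entropy_production_nonneg_general (hs : IsCompact s) {P : X → X → ℝ}
    (hP : ContinuousOn (fun p : X × X => P p.1 p.2) (s ×ˢ s))
    (hP_pos : ∀ x ∈ s, ∀ y ∈ s, 0 < P x y) {θ : X → ℝ} (hθ : ContinuousOn θ s)
    (hθ_pos : ∀ x ∈ s, 0 < θ x)
    (h_stationary : ∀ x ∈ s, ∫ y in s, θ x * P x y ∂μ = ∫ y in s, θ y * P y x ∂μ) :
    0 ≤ ∫ x in s, ∫ y in s, Real.log (P x y / P y x) * P x y * θ x ∂μ ∂μ := by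
  have hJ : ContinuousOn (flux θ P) (s ×ˢ s) :=
    (hθ.comp continuousOn_fst fun _ hz => hz.1).mul hP
  have hP_swap : ContinuousOn (fun z : X × X => P z.2 z.1) (s ×ˢ s) :=
    hP.comp continuous_swap.continuousOn fun _ hz => hz.symm
  have hJ_log : ContinuousOn (fun z => flux θ P z * Real.log (P z.1 z.2 / P z.2 z.1)) (s ×ˢ s) :=
    hJ.mul <| (hP.div hP_swap fun z hz => (hP_pos _ hz.2 _ hz.1).ne').log fun z hz =>
      (div_pos (hP_pos _ hz.1 _ hz.2) (hP_pos _ hz.2 _ hz.1)).ne'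
  have h_log_θ : ContinuousOn (fun x => Real.log (θ x)) s := hθ.log fun x hx => (hθ_pos x hx).ne'
  have h_fst := hJ.mul (h_log_θ.comp continuousOn_fst fun _ hz => hz.1)
  have h_snd := hJ.mul (h_log_θ.comp continuousOn_snd fun _ hz => hz.2)
  have h_mem : ∀ᵐ x ∂μ.restrict s, x ∈ s := ae_restrict_mem hs.measurableSet
  have h_mem_prod : ∀ᵐ z ∂(μ.restrict s).prod (μ.restrict s), z ∈ s ×ˢ s := by
    rw [Measure.prod_restrict]
    exact ae_restrict_mem (hs.prod hs).measurableSet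
  have h_nonneg := integral_flux_mul_log_div_nonneg
    (integrable_prod_restrict_of_continuousOn (μ := μ) hs hJ)
    (integrable_prod_restrict_of_continuousOn hs hJ_log)
    (integrable_prod_restrict_of_continuousOn hs h_fst)
    (integrable_prod_restrict_of_continuousOn hs h_snd)
    (h_mem.mono hθ_pos) (h_mem_prod.mono fun z hz => hP_pos _ hz.1 _ hz.2)
    (h_mem.mono h_stationary)
  rw [integral_prod _ (integrable_prod_restrict_of_continuousOn hs hJ_log)] at h_nonneg
  simpa only [flux, mul_assoc, mul_comm, mul_left_comm] using h_nonneg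

end Compact

/-- Proposition 5.4 of the paper: the entropy production rate
`ep = ∫₀¹ ∫₀¹ log(P(x,y)/P(y,x))·P(x,y)·θ(x) dy dx` is nonnegative. -/
theorem entropy_production_nonneg
    (P : ℝ → ℝ → ℝ)
    (hP : ContinuousOn (fun p : ℝ × ℝ => P p.1 p.2) (Set.Icc 0 1 ×ˢ Set.Icc 0 1))
    (hPpos : ∀ x ∈ Set.Icc (0:ℝ) 1, ∀ y ∈ Set.Icc (0:ℝ) 1, 0 < P x y)
    (hPint : ∀ x ∈ Set.Icc (0:ℝ) 1, ∫ y in (0:ℝ)..1, P x y = 1)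
    (theta : ℝ → ℝ) (htheta : ContinuousOn theta (Set.Icc 0 1))
    (hthetapos : ∀ x ∈ Set.Icc (0:ℝ) 1, 0 < theta x)
    (hthetaint : ∫ x in (0:ℝ)..1, theta x = 1)
    (hthetainv : ∀ x ∈ Set.Icc (0:ℝ) 1, ∫ y in (0:ℝ)..1, theta y * P y x = theta x) :
    0 ≤ ∫ x in (0:ℝ)..1, ∫ y in (0:ℝ)..1,
        Real.log (P x y / P y x) * P x y * theta x := by
  simp only [integral_of_le zero_le_one, ← integral_Icc_eq_integral_Ioc] at hPint hthetainv ⊢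
  exact entropy_production_nonneg_general isCompact_Icc hP hPpos htheta hthetapos fun x hx => by
    rw [MeasureTheory.integral_const_mul, hPint x hx, mul_one, hthetainv x hx]
end

section
/- For every n ≥ 1 and all x, y ∈ [0,1], the iterated kernel satisfies P^n(x,y) = cos(2π(x−y))/2^{2n−1} + 1. -/
open MeasureTheory intervalIntegral

/-- The cosine kernel `P(x,y) = cos(2π(x−y))/2 + 1`. -/
noncomputable def Pker (x y : ℝ) : ℝ := Real.cos (2 * Real.pi * (x - y)) / 2 + 1

/-- The iterated kernels: `Pn 0 = P` (so `Pn (n-1)` is `P^n`), and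
`P^{n+1}(x,y) = ∫₀¹ P^n(x,z)·P(z,y) dz`. -/
noncomputable def Pn : ℕ → ℝ → ℝ → ℝ
  | 0 => Pker
  | n + 1 => fun x y => ∫ z in (0:ℝ)..1, Pn n x z * Pker z y

/-!
On `[0, 1]` the constants are orthogonal to every cosine of nonzero integer frequency `m`, and
`cos (2πm(x - z))` composed with `cos (2πm(z - y))` gives half of `cos (2πm(x - y))`. Composition
therefore multiplies constant terms, and multiplies amplitudes up to a factor `1 / 2`, so each
composition with `P`, of amplitude `1 / 2`, divides the amplitude by `4`.
-/

/-- The translation-invariant kernel `a cos (2πm(x - y)) + b` of integer frequency `m`, amplitude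
`a` and constant term `b`, the form taken by all the iterates of `P`. -/
noncomputable def cosKernel (m : ℤ) (a b x y : ℝ) : ℝ :=
  a * Real.cos (2 * Real.pi * m * (x - y)) + b

lemma integral_cos_two_pi_int_mul_add {m : ℤ} (hm : m ≠ 0) (θ : ℝ) :
    ∫ z in (0 : ℝ)..1, Real.cos (2 * Real.pi * m * z + θ) = 0 := by
  have hfreq : 2 * Real.pi * m ≠ 0 :=
    mul_ne_zero Real.two_pi_pos.ne' (Int.cast_ne_zero.mpr hm)
  have hperiod : Real.sin (2 * Real.pi * m * 1 + θ) = Real.sin θ := by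
    rw [← Real.sin_add_int_mul_two_pi θ m]
    ring_nf
  rw [integral_comp_mul_add _ hfreq, integral_cos, hperiod]
  simp

lemma integral_cos_two_pi_int_mul_sub_right {m : ℤ} (hm : m ≠ 0) (y : ℝ) :
    ∫ z in (0 : ℝ)..1, Real.cos (2 * Real.pi * m * (z - y)) = 0 := by
  simpa only [mul_sub, ← sub_eq_add_neg] using
    integral_cos_two_pi_int_mul_add hm (-(2 * Real.pi * m * y))

lemma integral_cos_two_pi_int_mul_sub_left {m : ℤ} (hm : m ≠ 0) (x : ℝ) :
    ∫ z in (0 : ℝ)..1, Real.cos (2 * Real.pi * m * (x - z)) = 0 := by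
  have cos_symm (z : ℝ) :
      Real.cos (2 * Real.pi * m * (x - z)) = Real.cos (2 * Real.pi * m * (z - x)) := by
    rw [← neg_sub z x, mul_neg, Real.cos_neg]
  exact (intervalIntegral.integral_congr fun z _ ↦ cos_symm z).trans
    (integral_cos_two_pi_int_mul_sub_right hm x)

lemma integral_cos_two_pi_int_mul_sub_mul_cos_sub {m : ℤ} (hm : m ≠ 0) (x y : ℝ) :
    ∫ z in (0 : ℝ)..1,
        Real.cos (2 * Real.pi * m * (x - z)) * Real.cos (2 * Real.pi * m * (z - y)) =
      Real.cos (2 * Real.pi * m * (x - y)) / 2 := by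
  have product_to_sum (z : ℝ) :
      Real.cos (2 * Real.pi * m * (x - z)) * Real.cos (2 * Real.pi * m * (z - y)) =
        Real.cos (2 * Real.pi * m * (x - y)) / 2 +
          Real.cos (2 * Real.pi * (2 * m : ℤ) * z + -(2 * Real.pi * m * (x + y))) / 2 := by
    rw [← add_div, eq_div_iff two_ne_zero, mul_comm _ 2, ← mul_assoc, Real.two_mul_cos_mul_cos,
      add_comm, ← Real.cos_neg (_ - _)]
    push_cast
    ring_nf
  have two_mul_ne_zero : 2 * m ≠ 0 := mul_ne_zero two_ne_zero hm
  simp_rw [product_to_sum]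
  rw [intervalIntegral.integral_add (Continuous.intervalIntegrable (by fun_prop) 0 1)
      (Continuous.intervalIntegrable (by fun_prop) 0 1),
    intervalIntegral.integral_div, intervalIntegral.integral_div,
    integral_cos_two_pi_int_mul_add two_mul_ne_zero]
  simp

lemma integral_cosKernel_mul_cosKernel {m : ℤ} (hm : m ≠ 0) (a b c d x y : ℝ) :
    ∫ z in (0 : ℝ)..1, cosKernel m a b x z * cosKernel m c d z y =
      cosKernel m (a * c / 2) (b * d) x y := by
  have expand (z : ℝ) : cosKernel m a b x z * cosKernel m c d z y =
      a * c * (Real.cos (2 * Real.pi * m * (x - z)) * Real.cos (2 * Real.pi * m * (z - y))) +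
        a * d * Real.cos (2 * Real.pi * m * (x - z)) +
        b * c * Real.cos (2 * Real.pi * m * (z - y)) + b * d := by
    unfold cosKernel
    ring
  simp_rw [expand]
  rw [intervalIntegral.integral_add, intervalIntegral.integral_add,
    intervalIntegral.integral_add]
  · simp only [intervalIntegral.integral_const_mul,
      integral_cos_two_pi_int_mul_sub_mul_cos_sub hm,
      integral_cos_two_pi_int_mul_sub_left hm, integral_cos_two_pi_int_mul_sub_right hm,
      intervalIntegral.integral_const, cosKernel, smul_eq_mul]
    ring
  all_goals exact Continuous.intervalIntegrable (by fun_prop) 0 1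

lemma Pker_eq_cosKernel (x y : ℝ) : Pker x y = cosKernel 1 (1 / 2) 1 x y := by
  simp only [Pker, cosKernel, Int.cast_one, mul_one]
  ring

lemma Pn_eq_cosKernel (n : ℕ) (x y : ℝ) :
    Pn n x y = cosKernel 1 (1 / 2 ^ (2 * n + 1)) 1 x y := by
  induction n generalizing x y with
  | zero => exact (Pker_eq_cosKernel x y).trans (by norm_num)
  | succ n ih =>
    calc
      Pn (n + 1) x y = ∫ z in (0 : ℝ)..1,
          cosKernel 1 (1 / 2 ^ (2 * n + 1)) 1 x z * cosKernel 1 (1 / 2) 1 z y := by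
        simp only [Pn, ih, Pker_eq_cosKernel]
      _ = cosKernel 1 (1 / 2 ^ (2 * n + 1) * (1 / 2) / 2) (1 * 1) x y :=
        integral_cosKernel_mul_cosKernel one_ne_zero ..
      _ = cosKernel 1 (1 / 2 ^ (2 * (n + 1) + 1)) 1 x y := by
        congr 1 <;> ring

theorem iterated_cosine_kernel_general (n : ℕ) (x y : ℝ) :
    Pn n x y = Real.cos (2 * Real.pi * (x - y)) / 2 ^ (2 * n + 1) + 1 := by
  rw [Pn_eq_cosKernel, cosKernel, Int.cast_one, mul_one, one_div_mul_eq_div]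

/-- Example 2.1 of the paper: `P^n(x,y) = cos(2π(x−y))/2^{2n−1} + 1` for all `n ≥ 1`. -/
theorem iterated_cosine_kernel :
    ∀ n : ℕ, 1 ≤ n → ∀ x ∈ Set.Icc (0:ℝ) 1, ∀ y ∈ Set.Icc (0:ℝ) 1,
      Pn (n - 1) x y = Real.cos (2 * Real.pi * (x - y)) / 2 ^ (2 * n - 1) + 1 := by
  rintro (_ | n) hn x - y -
  · contradiction
  · exact iterated_cosine_kernel_general n x y
end

section
/- For every t ≥ 0 and all x, y ∈ [0,1], the series Σ_{k=1}^{∞} (t^k/k!)·Q_k(x,y) converges absolutely and its sum is K_t(x,y) = 2·cos(2π(x−y))·(e^{−3t/4} − e^{−t}) + (1 − e^{−t}). -/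
open MeasureTheory intervalIntegral

/-- `Q_k(x,y) = Σ_{j=1}^{k} (−1)^{k−j}·(k choose j)·P^j(x,y)` (so `Qk 0 = 0`). -/
noncomputable def Qk (k : ℕ) (x y : ℝ) : ℝ :=
  ∑ j ∈ Finset.Icc 1 k, (-1 : ℝ) ^ (k - j) * (k.choose j : ℝ) * Pn (j - 1) x y

/-! `P` has eigenfunction `1` with eigenvalue `1` and, by orthogonality of cosines, eigenfunctions
of frequency `1` with eigenvalue `1/4`, so `P^j(x,y) = 1 + (1/4)^j · 2 cos(2π(x−y))`. The binomial
theorem turns `a^j` into `(a−1)^k − (−1)^k` in `Q_k`, where `(−1)^k` is the missing `j = 0` term.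
Summing against `t^k/k!` gives `e^{(a−1)t} − e^{−t}` for each of `a = 1` and `a = 1/4`.
-/

theorem integral_cos_int_mul_two_pi_mul_sub {n : ℤ} (hn : n ≠ 0) (φ : ℝ) :
    ∫ z in (0 : ℝ)..1, Real.cos (n * (2 * Real.pi) * z - φ) = 0 := by
  have freq_ne_zero : (n * (2 * Real.pi) : ℝ) ≠ 0 := by positivity
  rw [integral_comp_mul_sub (fun u => Real.cos u) freq_ne_zero, integral_cos, mul_one,
    mul_zero, zero_sub, Real.sin_int_mul_two_pi_sub, Real.sin_neg, sub_self, smul_zero]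

theorem integral_cos_mul_cos_int_mul_two_pi {n : ℤ} (hn : n ≠ 0) (x y : ℝ) :
    ∫ z in (0 : ℝ)..1, Real.cos (n * (2 * Real.pi) * (x - z))
        * Real.cos (n * (2 * Real.pi) * (z - y))
      = Real.cos (n * (2 * Real.pi) * (x - y)) / 2 := by
  have product_to_sum (z : ℝ) :
      Real.cos (n * (2 * Real.pi) * (x - z)) * Real.cos (n * (2 * Real.pi) * (z - y))
        = Real.cos (n * (2 * Real.pi) * (x - y)) / 2
          + Real.cos ((2 * n : ℤ) * (2 * Real.pi) * z - n * (2 * Real.pi) * (x + y)) / 2 := by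
    have h := Real.two_mul_cos_mul_cos (n * (2 * Real.pi) * (x - z)) (n * (2 * Real.pi) * (z - y))
    have phase_sub : n * (2 * Real.pi) * (x - z) - n * (2 * Real.pi) * (z - y)
        = -((2 * n : ℤ) * (2 * Real.pi) * z - n * (2 * Real.pi) * (x + y)) := by push_cast; ring
    rw [phase_sub, Real.cos_neg, ← mul_add, sub_add_sub_cancel] at h
    linarith
  simp_rw [product_to_sum]
  rw [intervalIntegral.integral_add (by simp) (Continuous.intervalIntegrable (by fun_prop) _ _),
    intervalIntegral.integral_div _ (fun z => Real.cos (_ * z - _)),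
    integral_cos_int_mul_two_pi_mul_sub (mul_ne_zero two_ne_zero hn)]
  simp

theorem integral_add_cos_mul_add_cos {n : ℤ} (hn : n ≠ 0) (a b c d x y : ℝ) :
    ∫ z in (0 : ℝ)..1, (a + b * Real.cos (n * (2 * Real.pi) * (x - z)))
        * (c + d * Real.cos (n * (2 * Real.pi) * (z - y)))
      = a * c + b * d / 2 * Real.cos (n * (2 * Real.pi) * (x - y)) := by
  have expansion (z : ℝ) :
      (a + b * Real.cos (n * (2 * Real.pi) * (x - z)))
          * (c + d * Real.cos (n * (2 * Real.pi) * (z - y)))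
        = a * c + b * c * Real.cos (n * (2 * Real.pi) * z - n * (2 * Real.pi) * x)
          + a * d * Real.cos (n * (2 * Real.pi) * z - n * (2 * Real.pi) * y)
          + b * d * (Real.cos (n * (2 * Real.pi) * (x - z))
            * Real.cos (n * (2 * Real.pi) * (z - y))) := by
    rw [← mul_sub, ← mul_sub, ← neg_sub x z, mul_neg, Real.cos_neg]
    ring
  simp_rw [expansion]
  rw [intervalIntegral.integral_add, intervalIntegral.integral_add, intervalIntegral.integral_add]
  · simp only [intervalIntegral.integral_const_mul, intervalIntegral.integral_const,
      integral_cos_int_mul_two_pi_mul_sub hn, integral_cos_mul_cos_int_mul_two_pi hn,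
      sub_zero, one_smul]
    ring
  all_goals exact Continuous.intervalIntegrable (by fun_prop) _ _

theorem Pker_eq (x y : ℝ) : Pker x y = 1 + 1 / 2 * Real.cos (2 * Real.pi * (x - y)) := by
  rw [Pker]
  ring

theorem Pn_eq (n : ℕ) (x y : ℝ) :
    Pn n x y = 1 + 2 * (1 / 4) ^ (n + 1) * Real.cos (2 * Real.pi * (x - y)) := by
  induction n generalizing y with
  | zero => rw [Pn, Pker_eq]; ring
  | succ n ih =>
    have h := integral_add_cos_mul_add_cos one_ne_zero 1 (2 * (1 / 4) ^ (n + 1)) 1 (1 / 2) x y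
    simp only [Int.cast_one, one_mul] at h
    simp only [Pn, ih, Pker_eq, h]
    ring

theorem sum_Icc_one_neg_one_pow_mul_choose_mul_pow {R : Type*} [CommRing R] (a : R) (k : ℕ) :
    ∑ j ∈ Finset.Icc 1 k, (-1) ^ (k - j) * (k.choose j : R) * a ^ j
      = (a - 1) ^ k - (-1) ^ k := by
  have binomial : (a - 1) ^ k
      = ∑ j ∈ Finset.range (k + 1), (-1) ^ (k - j) * (k.choose j : R) * a ^ j := by
    rw [sub_eq_add_neg, add_pow]
    exact Finset.sum_congr rfl fun j _ => by ring
  rw [binomial, Finset.sum_range_eq_add_Ico _ k.succ_pos, ← Finset.Ico_add_one_right_eq_Icc]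
  simp

theorem Qk_eq (k : ℕ) (x y : ℝ) :
    Qk k x y = 2 * Real.cos (2 * Real.pi * (x - y)) * ((1 / 4 - 1) ^ k - (-1) ^ k)
      + ((1 - 1) ^ k - (-1) ^ k) := by
  simp only [← sum_Icc_one_neg_one_pow_mul_choose_mul_pow]
  rw [Qk, Finset.mul_sum, ← Finset.sum_add_distrib]
  refine Finset.sum_congr rfl fun j hj => ?_
  rw [Pn_eq, Nat.sub_add_cancel (Finset.mem_Icc.1 hj).1]
  ring

theorem hasSum_pow_div_factorial_mul_sub_one_pow_sub_neg_one_pow {𝕜 : Type*} [NormedField 𝕜]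
    [NormedAlgebra ℚ 𝕜] [CompleteSpace 𝕜] (a t : 𝕜) :
    HasSum (fun k : ℕ => t ^ k / (k.factorial : 𝕜) * ((a - 1) ^ k - (-1) ^ k))
      (NormedSpace.exp ((a - 1) * t) - NormedSpace.exp (-t)) := by
  refine ((NormedSpace.expSeries_div_hasSum_exp ((a - 1) * t)).sub
    (NormedSpace.expSeries_div_hasSum_exp (-t))).congr_fun fun k => ?_
  rw [mul_pow, neg_pow t]
  ring

theorem cosine_kernel_Kt_general (t x y : ℝ) :
    HasSum (fun k : ℕ => t ^ k / (k.factorial : ℝ) * Qk k x y)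
      (2 * Real.cos (2 * Real.pi * (x - y)) * (Real.exp (-3 * t / 4) - Real.exp (-t))
        + (1 - Real.exp (-t))) := by
  have cos_part := (hasSum_pow_div_factorial_mul_sub_one_pow_sub_neg_one_pow (1 / 4) t).mul_left
    (2 * Real.cos (2 * Real.pi * (x - y)))
  have const_part := hasSum_pow_div_factorial_mul_sub_one_pow_sub_neg_one_pow 1 t
  have exponent_eq : (1 / 4 - 1) * t = -3 * t / 4 := by ring
  rw [← Real.exp_eq_exp_ℝ, exponent_eq] at cos_part
  rw [← Real.exp_eq_exp_ℝ, sub_self, zero_mul, Real.exp_zero] at const_part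
  refine (cos_part.add const_part).congr_fun fun k => ?_
  rw [Qk_eq]
  ring

/-- Example 2.1 of the paper: the series `Σ_{k≥1} (t^k/k!)·Q_k(x,y)` converges absolutely
and its sum is `K_t(x,y) = 2·cos(2π(x−y))·(e^{−3t/4} − e^{−t}) + (1 − e^{−t})`.
(The `k = 0` term of the `tsum` below vanishes, since `Qk 0 = 0`.) -/
theorem cosine_kernel_Kt (t : ℝ) (ht : 0 ≤ t)
    (x : ℝ) (hx : x ∈ Set.Icc (0:ℝ) 1) (y : ℝ) (hy : y ∈ Set.Icc (0:ℝ) 1) :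
    Summable (fun k : ℕ => |t ^ k / (k.factorial : ℝ) * Qk k x y|) ∧
    ∑' k : ℕ, t ^ k / (k.factorial : ℝ) * Qk k x y
      = 2 * Real.cos (2 * Real.pi * (x - y)) * (Real.exp (-3 * t / 4) - Real.exp (-t))
        + (1 - Real.exp (-t)) := by
  have h := cosine_kernel_Kt_general t x y
  exact ⟨h.summable.abs, h.tsum_eq⟩
end

section
/- For all x, y ∈ [0,1], the map t ↦ K_t(x,y) is differentiable and for every t ≥ 0 one has ∂_t K_t(x,y) = −K_t(x,y) + e^{−t}·P(x,y) + ∫₀¹ P(x,z)·K_t(z,y) dz, and also ∂_t K_t(x,y) = −K_t(x,y) + e^{−t}·P(x,y) + ∫₀¹ K_t(x,z)·P(z,y) dz (the forward and backward Kolmogorov equations for the kernel K_t). -/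
open MeasureTheory

/-- The unit interval `[0,1]` as a (compact) subspace of `ℝ`. -/
abbrev I01 := Set.Icc (0:ℝ) 1

/-- Lebesgue measure on `[0,1]`, viewed as a measure on the subtype. -/
noncomputable def muI : Measure I01 := Measure.comap Subtype.val volume

/-- The iterated kernels `P¹ = P`, `P^{k+1}(x,y) = ∫₀¹ P^k(x,z)·P(z,y) dz`
(`Pit P k` is `P^{k+1}`). -/
noncomputable def Pit (P : I01 → I01 → ℝ) : ℕ → I01 → I01 → ℝ
  | 0 => P
  | n + 1 => fun x y => ∫ z, Pit P n x z * P z y ∂muI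

/-- `Q_k(x,y) = Σ_{j=1}^{k} (−1)^{k−j}·(k choose j)·P^j(x,y)` (so `Qit P 0 = 0`). -/
noncomputable def Qit (P : I01 → I01 → ℝ) (k : ℕ) (x y : I01) : ℝ :=
  ∑ j ∈ Finset.Icc 1 k, (-1 : ℝ) ^ (k - j) * (k.choose j : ℝ) * Pit P (j - 1) x y

/-- `K_t(x,y) = Σ_{k=1}^{∞} (t^k/k!)·Q_k(x,y)` (the `k = 0` term of the `tsum`
vanishes since `Qit P 0 = 0`). -/
noncomputable def Kt (P : I01 → I01 → ℝ) (t : ℝ) (x y : I01) : ℝ :=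
  ∑' k : ℕ, t ^ k / (k.factorial : ℝ) * Qit P k x y

/-!
Let `𝓛` be the integral operator with kernel `P`. By the Cauchy product and the binomial theorem,
`K_t = exp (-t) * E_t`, where `E_t = ∑ n ≥ 1, t ^ n / n! * P ^ n` is the kernel of `exp (t𝓛) - I`.
Differentiating the series of `E_t` termwise lowers the factorials, so that `∂_t E_t` is `P` plus
the series of `E_t` with `P ^ (n + 1)` in place of `P ^ n`. The latter is `∫ E_t(x,z) P(z,y) dz` by
dominated convergence, and the product rule gives the backward equation. By Fubini the iterated
kernels of the transposed kernel are the transposed iterated kernels, so the forward equation is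
the backward equation of the transposed kernel.
-/

open Finset Function
open scoped Nat

section ExponentialGeneratingFunctions

variable {𝕜 : Type*} [RCLike 𝕜]

lemma norm_pow_div_factorial_mul_le {s a : 𝕜} {r B : ℝ} (hs : ‖s‖ ≤ r) (ha : ‖a‖ ≤ B) (n : ℕ) :
    ‖s ^ n / n ! * a‖ ≤ r ^ n / n ! * B := by
  rw [norm_mul, norm_div, norm_pow, RCLike.norm_natCast]
  have hr : 0 ≤ r := (norm_nonneg s).trans hs
  gcongr

lemma summable_pow_div_factorial_mul_geometric (r C D : ℝ) :
    Summable fun n : ℕ => r ^ n / n ! * (D * C ^ n) :=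
  ((Real.summable_pow_div_factorial (r * C)).mul_left D).congr fun n => by
    rw [mul_pow]
    ring

lemma summable_pow_succ_div_factorial_mul_geometric (r C D : ℝ) :
    Summable fun n : ℕ => r ^ (n + 1) / (n + 1)! * (D * C ^ n) := by
  refine .of_norm_bounded
    ((summable_pow_div_factorial_mul_geometric ‖r‖ ‖C‖ ‖D‖).mul_left ‖r‖) fun n => ?_
  calc ‖r ^ (n + 1) / (n + 1)! * (D * C ^ n)‖
      ≤ ‖r‖ ^ (n + 1) / (n + 1)! * (‖D‖ * ‖C‖ ^ n) :=
        norm_pow_div_factorial_mul_le le_rfl (by simp) (n + 1)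
    _ ≤ ‖r‖ ^ (n + 1) / n ! * (‖D‖ * ‖C‖ ^ n) := by
        gcongr
        exact n.le_succ
    _ = ‖r‖ * (‖r‖ ^ n / n ! * (‖D‖ * ‖C‖ ^ n)) := by ring

lemma hasDerivAt_pow_succ_div_factorial (n : ℕ) (t : 𝕜) :
    HasDerivAt (fun s : 𝕜 => s ^ (n + 1) / (n + 1)!) (t ^ n / n !) t := by
  refine ((hasDerivAt_pow (n + 1) t).div_const _).congr_deriv ?_
  rw [Nat.factorial_succ, Nat.cast_mul, Nat.add_sub_cancel,
    mul_div_mul_left _ _ (Nat.cast_ne_zero.2 n.succ_ne_zero)]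

lemma hasDerivAt_tsum_pow_succ_div_factorial_mul {a : ℕ → 𝕜} {C D : ℝ}
    (ha : ∀ n, ‖a n‖ ≤ D * C ^ n) (t : 𝕜) :
    HasDerivAt (fun s => ∑' n : ℕ, s ^ (n + 1) / (n + 1)! * a n) (∑' n : ℕ, t ^ n / n ! * a n)
      t := by
  have ht : t ∈ Metric.ball (0 : 𝕜) (‖t‖ + 1) := by simp
  refine hasDerivAt_tsum_of_isPreconnected (g' := fun n s => s ^ n / n ! * a n)
    (summable_pow_div_factorial_mul_geometric (‖t‖ + 1) C D) Metric.isOpen_ball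
    Metric.isPreconnected_ball
    (fun n s _ => (hasDerivAt_pow_succ_div_factorial n s).mul_const (a n))
    (fun n s hs => norm_pow_div_factorial_mul_le (mem_ball_zero_iff.1 hs).le (ha n) n)
    (Metric.mem_ball_self (by positivity)) ?_ ht
  simp

lemma tsum_pow_div_factorial_mul_sum_choose {b : ℕ → 𝕜} {t : 𝕜}
    (hb : Summable fun n : ℕ => ‖t ^ n / n ! * b n‖) :
    ∑' k : ℕ, t ^ k / k ! * ∑ j ∈ range (k + 1), (-1) ^ (k - j) * (k.choose j : 𝕜) * b j =
      NormedSpace.exp (-t) * ∑' n : ℕ, t ^ n / n ! * b n := by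
  rw [mul_comm, NormedSpace.exp_eq_tsum_div, tsum_mul_tsum_eq_tsum_sum_range_of_summable_norm hb
    (NormedSpace.norm_expSeries_div_summable (-t))]
  refine tsum_congr fun k => ?_
  rw [mul_sum]
  refine sum_congr rfl fun j hj => ?_
  obtain ⟨i, rfl⟩ := Nat.exists_eq_add_of_le (mem_range_succ_iff.1 hj)
  rw [Nat.add_sub_cancel_left, Nat.cast_add_choose, neg_pow t, pow_add]
  have hfactorial : ((j + i)! : 𝕜) ≠ 0 := Nat.cast_ne_zero.2 (j + i).factorial_ne_zero
  field_simp

end ExponentialGeneratingFunctions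

section IteratedKernels

variable {X 𝕜 : Type*} [MeasurableSpace X] [RCLike 𝕜]

/-- The iterated kernels of `P` with respect to `μ`; as for `Pit`, the index is shifted, so that
`iterKernel μ P n` is the kernel of the `(n + 1)`-st power of the integral operator with
kernel `P`. -/
noncomputable def iterKernel (μ : Measure X) (P : X → X → 𝕜) : ℕ → X → X → 𝕜
  | 0 => P
  | n + 1 => fun x y => ∫ z, iterKernel μ P n x z * P z y ∂μ

/-- The kernel of `exp (t𝓛) - I`, where `𝓛` is the integral operator with kernel `P`. -/
noncomputable def expKernel (μ : Measure X) (P : X → X → 𝕜) (t : 𝕜) (x y : X) : 𝕜 :=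
  ∑' n : ℕ, t ^ (n + 1) / (n + 1)! * iterKernel μ P n x y

/-- The kernel of `exp (t(𝓛 - I)) - exp (-t) I`, where `𝓛` is the integral operator with
kernel `P`. It generalizes `Kt` and is given by the same series: the inner sum is the
kernel of `(𝓛 - I) ^ k - (-I) ^ k`. -/
noncomputable def semigroupKernel (μ : Measure X) (P : X → X → 𝕜) (t : 𝕜) (x y : X) : 𝕜 :=
  ∑' k : ℕ, t ^ k / k ! *
    ∑ j ∈ Icc 1 k, (-1) ^ (k - j) * (k.choose j : 𝕜) * iterKernel μ P (j - 1) x y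

variable {μ : Measure X} [IsFiniteMeasure μ] {P : X → X → 𝕜} {M : ℝ}

lemma stronglyMeasurable_iterKernel (hP : StronglyMeasurable (uncurry P)) (n : ℕ) :
    StronglyMeasurable (uncurry (iterKernel μ P n)) := by
  induction n with
  | zero => exact hP
  | succ n ih =>
    have hleft : StronglyMeasurable fun q : (X × X) × X => iterKernel μ P n q.1.1 q.2 :=
      ih.comp_measurable (measurable_fst.fst.prodMk measurable_snd)
    have hright : StronglyMeasurable fun q : (X × X) × X => P q.2 q.1.2 :=
      hP.comp_measurable (measurable_snd.prodMk measurable_fst.snd)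
    exact (hleft.mul hright).integral_prod_right'

lemma norm_iterKernel_le (hM : ∀ x y, ‖P x y‖ ≤ M) (n : ℕ) (x y : X) :
    ‖iterKernel μ P n x y‖ ≤ M * (M * μ.real Set.univ) ^ n := by
  induction n generalizing y with
  | zero => simpa [iterKernel] using hM x y
  | succ n ih =>
    calc ‖∫ z, iterKernel μ P n x z * P z y ∂μ‖
        ≤ M * (M * μ.real Set.univ) ^ n * M * μ.real Set.univ :=
          norm_integral_le_of_norm_le_const <| .of_forall fun z =>
            norm_mul_le_of_le (ih z) (hM z y)
      _ = M * (M * μ.real Set.univ) ^ (n + 1) := by ring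

lemma iterKernel_succ' (hP : StronglyMeasurable (uncurry P)) (hM : ∀ x y, ‖P x y‖ ≤ M)
    (n : ℕ) (x y : X) :
    iterKernel μ P (n + 1) x y = ∫ z, P x z * iterKernel μ P n z y ∂μ := by
  induction n generalizing y with
  | zero => rfl
  | succ n ih =>
    have hint : Integrable
        (uncurry fun z w => P x w * iterKernel μ P n w z * P z y) (μ.prod μ) := by
      refine .of_bound (C := M * (M * (M * μ.real Set.univ) ^ n) * M) ?_ (.of_forall fun q =>
        norm_mul_le_of_le (norm_mul_le_of_le (hM _ _) (norm_iterKernel_le hM _ _ _)) (hM _ _))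
      exact (((hP.comp_measurable (measurable_const.prodMk measurable_snd)).mul
        ((stronglyMeasurable_iterKernel hP n).comp_measurable measurable_swap)).mul
        (hP.comp_measurable (measurable_fst.prodMk measurable_const))).aestronglyMeasurable
    calc ∫ z, iterKernel μ P (n + 1) x z * P z y ∂μ
        = ∫ z, ∫ w, P x w * iterKernel μ P n w z * P z y ∂μ ∂μ := by
          simp only [ih, integral_mul_const]
      _ = ∫ w, ∫ z, P x w * iterKernel μ P n w z * P z y ∂μ ∂μ := integral_integral_swap hint
      _ = ∫ w, P x w * iterKernel μ P (n + 1) w y ∂μ := by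
          simp only [mul_assoc, integral_const_mul, iterKernel]

lemma iterKernel_flip (hP : StronglyMeasurable (uncurry P)) (hM : ∀ x y, ‖P x y‖ ≤ M)
    (n : ℕ) (x y : X) : iterKernel μ (flip P) n y x = iterKernel μ P n x y := by
  induction n generalizing x with
  | zero => rfl
  | succ n ih =>
    rw [iterKernel_succ' hP hM]
    simp only [iterKernel, ih, flip, mul_comm]

lemma semigroupKernel_flip (hP : StronglyMeasurable (uncurry P)) (hM : ∀ x y, ‖P x y‖ ≤ M)
    (t : 𝕜) (x y : X) : semigroupKernel μ (flip P) t y x = semigroupKernel μ P t x y := by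
  simp only [semigroupKernel, iterKernel_flip hP hM]

lemma summable_norm_expKernel_terms (hM : ∀ x y, ‖P x y‖ ≤ M) (t : 𝕜) (x y : X) :
    Summable fun n : ℕ => ‖t ^ (n + 1) / (n + 1)! * iterKernel μ P n x y‖ :=
  .of_nonneg_of_le (fun _ => norm_nonneg _)
    (fun n => norm_pow_div_factorial_mul_le le_rfl (norm_iterKernel_le hM n x y) (n + 1))
    (summable_pow_succ_div_factorial_mul_geometric ‖t‖ _ M)

lemma integral_expKernel_mul (hP : StronglyMeasurable (uncurry P)) (hM : ∀ x y, ‖P x y‖ ≤ M)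
    (t : 𝕜) (x y : X) :
    ∫ z, expKernel μ P t x z * P z y ∂μ =
      ∑' n : ℕ, t ^ (n + 1) / (n + 1)! * iterKernel μ P (n + 1) x y := by
  have hsum : HasSum
      (fun n : ℕ => ∫ z, t ^ (n + 1) / (n + 1)! * iterKernel μ P n x z * P z y ∂μ)
      (∫ z, expKernel μ P t x z * P z y ∂μ) := by
    refine hasSum_integral_of_dominated_convergence
      (fun n _ => ‖t‖ ^ (n + 1) / (n + 1)! * (M * (M * μ.real Set.univ) ^ n) * M)
      (fun n => ?_) (fun n => .of_forall fun z => ?_) (.of_forall fun _ => ?_)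
      (integrable_const _) (.of_forall fun z => ?_)
    · exact (((stronglyMeasurable_iterKernel hP n).of_uncurry_left.const_mul _).mul
        hP.of_uncurry_right).aestronglyMeasurable
    · exact norm_mul_le_of_le (norm_pow_div_factorial_mul_le le_rfl
        (norm_iterKernel_le hM n x z) (n + 1)) (hM z y)
    · exact (summable_pow_succ_div_factorial_mul_geometric ‖t‖ _ M).mul_right M
    · exact (summable_norm_expKernel_terms hM t x z).of_norm.hasSum.mul_right _
  simpa only [mul_assoc, integral_const_mul, iterKernel] using hsum.tsum_eq.symm

lemma hasDerivAt_expKernel (hP : StronglyMeasurable (uncurry P)) (hM : ∀ x y, ‖P x y‖ ≤ M)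
    (t : 𝕜) (x y : X) :
    HasDerivAt (fun s => expKernel μ P s x y)
      (P x y + ∫ z, expKernel μ P t x z * P z y ∂μ) t := by
  have hbound := fun n => norm_iterKernel_le (μ := μ) hM n x y
  have hsum : Summable fun n : ℕ => t ^ n / n ! * iterKernel μ P n x y :=
    .of_norm_bounded (summable_pow_div_factorial_mul_geometric ‖t‖ _ _)
      fun n => norm_pow_div_factorial_mul_le le_rfl (hbound n) n
  refine (hasDerivAt_tsum_pow_succ_div_factorial_mul hbound t).congr_deriv ?_
  rw [hsum.tsum_eq_zero_add, integral_expKernel_mul hP hM]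
  simp [iterKernel]

lemma semigroupKernel_eq_exp_mul_expKernel (hM : ∀ x y, ‖P x y‖ ≤ M) (t : 𝕜) (x y : X) :
    semigroupKernel μ P t x y = NormedSpace.exp (-t) * expKernel μ P t x y := by
  -- The missing term `b 0` belongs to the power `I` of the integral operator, which has no kernel.
  let b : ℕ → 𝕜 := fun j => if j = 0 then 0 else iterKernel μ P (j - 1) x y
  have hb : Summable fun n : ℕ => ‖t ^ n / n ! * b n‖ :=
    (summable_nat_add_iff 1).1 (summable_norm_expKernel_terms hM t x y)
  have hexp : ∑' n : ℕ, t ^ n / n ! * b n = expKernel μ P t x y := by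
    rw [hb.of_norm.tsum_eq_zero_add]
    simp [b, expKernel]
  rw [← hexp, ← tsum_pow_div_factorial_mul_sum_choose hb, semigroupKernel]
  refine tsum_congr fun k => congrArg _ ?_
  refine sum_subset_zero_on_sdiff (fun j hj => ?_) (fun j hj => ?_) (fun j hj => ?_)
  · exact mem_range_succ_iff.2 (mem_Icc.1 hj).2
  · have hj0 : j = 0 := by grind
    simp [b, hj0]
  · simp [b, Nat.one_le_iff_ne_zero.1 (mem_Icc.1 hj).1]

lemma hasDerivAt_semigroupKernel (hP : StronglyMeasurable (uncurry P))
    (hM : ∀ x y, ‖P x y‖ ≤ M) (t : 𝕜) (x y : X) :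
    HasDerivAt (fun s => semigroupKernel μ P s x y)
      (-semigroupKernel μ P t x y + NormedSpace.exp (-t) * P x y
        + ∫ z, semigroupKernel μ P t x z * P z y ∂μ) t := by
  have hexp : HasDerivAt (fun s : 𝕜 => NormedSpace.exp (-s)) (-NormedSpace.exp (-t)) t :=
    (hasDerivAt_exp.scomp t (hasDerivAt_neg t)).congr_deriv (by simp)
  simp only [semigroupKernel_eq_exp_mul_expKernel hM, mul_assoc, integral_const_mul]
  exact (hexp.mul (hasDerivAt_expKernel hP hM t x y)).congr_deriv (by ring)

theorem Kt_kolmogorov_equations_general (hP : StronglyMeasurable (uncurry P))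
    (hM : ∀ x y, ‖P x y‖ ≤ M) (x y : X) (t : 𝕜) :
    HasDerivAt (fun s => semigroupKernel μ P s x y)
      (-semigroupKernel μ P t x y + NormedSpace.exp (-t) * P x y
        + ∫ z, P x z * semigroupKernel μ P t z y ∂μ) t ∧
    HasDerivAt (fun s => semigroupKernel μ P s x y)
      (-semigroupKernel μ P t x y + NormedSpace.exp (-t) * P x y
        + ∫ z, semigroupKernel μ P t x z * P z y ∂μ) t := by
  refine ⟨?_, hasDerivAt_semigroupKernel hP hM t x y⟩
  have htranspose := hasDerivAt_semigroupKernel (μ := μ) (P := flip P)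
    (hP.comp_measurable measurable_swap) (fun x y => hM y x) t y x
  simpa only [semigroupKernel_flip hP hM, flip, mul_comm] using htranspose

end IteratedKernels

instance isProbabilityMeasure_muI : IsProbabilityMeasure muI :=
  inferInstanceAs (IsProbabilityMeasure (volume : Measure unitInterval))

lemma Pit_eq_iterKernel (P : I01 → I01 → ℝ) (n : ℕ) : Pit P n = iterKernel muI P n := by
  induction n with
  | zero => rfl
  | succ n ih => simp only [Pit, iterKernel, ih]

lemma Kt_eq_semigroupKernel (P : I01 → I01 → ℝ) : Kt P = semigroupKernel muI P := by
  simp only [funext_iff, Kt, Qit, semigroupKernel, Pit_eq_iterKernel, implies_true]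

/-- Appendix 1 of the paper: the forward and backward Kolmogorov equations for the
kernel `K_t`: for all `x, y` the map `t ↦ K_t(x,y)` is differentiable and for `t ≥ 0`,
`∂_t K_t(x,y) = −K_t(x,y) + e^{−t}·P(x,y) + ∫₀¹ P(x,z)·K_t(z,y) dz`
`           = −K_t(x,y) + e^{−t}·P(x,y) + ∫₀¹ K_t(x,z)·P(z,y) dz`. -/
theorem Kt_kolmogorov_equations
    (P : I01 → I01 → ℝ) (hP : Continuous fun p : I01 × I01 => P p.1 p.2) :
    ∀ (x y : I01) (t : ℝ), 0 ≤ t →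
      HasDerivAt (fun s : ℝ => Kt P s x y)
        (-Kt P t x y + Real.exp (-t) * P x y + ∫ z, P x z * Kt P t z y ∂muI) t ∧
      HasDerivAt (fun s : ℝ => Kt P s x y)
        (-Kt P t x y + Real.exp (-t) * P x y + ∫ z, Kt P t x z * P z y ∂muI) t := by
  intro x y t _
  obtain ⟨M, hM⟩ := isCompact_univ.exists_bound_of_continuousOn hP.continuousOn
  simpa only [Kt_eq_semigroupKernel, Real.exp_eq_exp_ℝ] using
    Kt_kolmogorov_equations_general (μ := muI) hP.stronglyMeasurable
      (fun x y => hM (x, y) (Set.mem_univ _)) x y t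
end

section
/- For all s, t ≥ 0 and all x, y ∈ [0,1], the kernel K satisfies the Chapman–Kolmogorov-type relation K_{s+t}(x,y) = e^{−t}·K_s(x,y) + e^{−s}·K_t(x,y) + ∫₀¹ K_t(x,z)·K_s(z,y) dz. -/
open MeasureTheory

/-!
With the convention `P⁰ = 0`, put `A_t = ∑ₙ (tⁿ/n!) Pⁿ`, the continuous part of `exp (t𝓛)`.
The alternating binomial sum in `Q_k` is a product of exponential generating functions, so
`K_t = e^{-t} A_t`. Expanding `(t + s)ⁿ` binomially writes `A_{t+s}` as the sum over all `(i, j)` of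
`(tⁱ/i!) (sʲ/j!) P^{i+j}`. The terms with `i, j ≥ 1` satisfy `P^{i+j} = ∫ Pⁱ Pʲ` and sum to
`∫ A_t A_s`; the axes `i = 0` and `j = 0`, where the identity operator would sit,
contribute `A_s` and `A_t`.
-/

open Finset.HasAntidiagonal (antidiagonal mem_antidiagonal sigmaAntidiagonalEquivProd)
open scoped Nat

section ExponentialGeneratingFunction

/-- The exponential generating function `∑ aₙ tⁿ / n!` of a sequence `a`, as a function of the
scalar `t` and not as a formal power series; it is `0` where the series is not summable. -/
noncomputable def expGenFun {𝕜 : Type*} [DivisionRing 𝕜] [TopologicalSpace 𝕜]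
    (a : ℕ → 𝕜) (t : 𝕜) : 𝕜 :=
  ∑' n, t ^ n / n ! * a n

theorem pow_div_factorial_mul_choose {𝕜 : Type*} [Field 𝕜] [CharZero 𝕜] (s t : 𝕜) (i j : ℕ) :
    s ^ i * t ^ j / (i + j)! * (i + j).choose i = s ^ i / i ! * (t ^ j / j !) := by
  have : ((i + j)! : 𝕜) ≠ 0 := Nat.cast_ne_zero.mpr (Nat.factorial_ne_zero _)
  rw [Nat.cast_add_choose]
  field_simp

theorem sum_antidiagonal_pow_div_factorial {𝕜 : Type*} [Field 𝕜] [CharZero 𝕜] (s t : 𝕜) (n : ℕ) :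
    ∑ p ∈ antidiagonal n, s ^ p.1 / p.1 ! * (t ^ p.2 / p.2 !) = (s + t) ^ n / n ! := by
  rw [(Commute.all s t).add_pow', Finset.sum_div]
  refine Finset.sum_congr rfl fun p hp => ?_
  obtain rfl := mem_antidiagonal.mp hp
  rw [← pow_div_factorial_mul_choose, nsmul_eq_mul]
  ring

theorem expGenFun_mul {𝕜 : Type*} [NormedField 𝕜] [CharZero 𝕜] [CompleteSpace 𝕜]
    {a b : ℕ → 𝕜} {t : 𝕜} (ha : Summable fun n => ‖t ^ n / n ! * a n‖)
    (hb : Summable fun n => ‖t ^ n / n ! * b n‖) :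
    expGenFun a t * expGenFun b t = expGenFun
      (fun n => ∑ p ∈ antidiagonal n, (n.choose p.1 : 𝕜) * (a p.1 * b p.2)) t := by
  simp only [expGenFun]
  rw [tsum_mul_tsum_eq_tsum_sum_antidiagonal_of_summable_norm ha hb]
  refine tsum_congr fun n => ?_
  rw [Finset.mul_sum]
  refine Finset.sum_congr rfl fun p hp => ?_
  obtain rfl := mem_antidiagonal.mp hp
  calc t ^ p.1 / p.1 ! * a p.1 * (t ^ p.2 / p.2 ! * b p.2)
    _ = t ^ p.1 / p.1 ! * (t ^ p.2 / p.2 !) * (a p.1 * b p.2) := mul_mul_mul_comm ..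
    _ = t ^ (p.1 + p.2) / (p.1 + p.2)! * ((p.1 + p.2).choose p.1 * (a p.1 * b p.2)) := by
      rw [← pow_div_factorial_mul_choose, pow_add, mul_assoc]

theorem expGenFun_add_of_hasSum {𝕜 : Type*} [Field 𝕜] [CharZero 𝕜] [TopologicalSpace 𝕜]
    [ContinuousAdd 𝕜] [T3Space 𝕜] {a : ℕ → 𝕜} {s t S : 𝕜}
    (h : HasSum (fun p : ℕ × ℕ => s ^ p.1 / p.1 ! * (t ^ p.2 / p.2 !) * a (p.1 + p.2)) S) :
    expGenFun a (s + t) = S := by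
  have h_diagonals := (sigmaAntidiagonalEquivProd.hasSum_iff.mpr h).sigma
    fun _ => hasSum_fintype _ _
  refine Eq.trans (tsum_congr fun n => ?_) h_diagonals.tsum_eq
  rw [← sum_antidiagonal_pow_div_factorial, Finset.sum_mul, ← Finset.sum_coe_sort]
  refine Finset.sum_congr rfl fun p _ => ?_
  exact congrArg (_ * a ·) (mem_antidiagonal.mp p.2).symm

variable {𝕜 : Type*} [RCLike 𝕜]

theorem norm_pow_div_factorial_mul_le_s14 {c : 𝕜} {M : ℝ} {n : ℕ} (hc : ‖c‖ ≤ M ^ n) (t : 𝕜) :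
    ‖t ^ n / n ! * c‖ ≤ (‖t‖ * M) ^ n / n ! := by
  rw [norm_mul, norm_div, norm_pow, RCLike.norm_natCast, mul_pow, mul_div_right_comm]
  gcongr

theorem summable_norm_pow_div_factorial_mul {a : ℕ → 𝕜} {M : ℝ} (ha : ∀ n, ‖a n‖ ≤ M ^ n) (t : 𝕜) :
    Summable fun n => ‖t ^ n / n ! * a n‖ :=
  .of_nonneg_of_le (fun _ => norm_nonneg _) (fun n => norm_pow_div_factorial_mul_le_s14 (ha n) t)
    (Real.summable_pow_div_factorial _)

theorem hasSum_expGenFun {a : ℕ → 𝕜} {M : ℝ} (ha : ∀ n, ‖a n‖ ≤ M ^ n) (t : 𝕜) :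
    HasSum (fun n => t ^ n / n ! * a n) (expGenFun a t) :=
  (summable_norm_pow_div_factorial_mul ha t).of_norm.hasSum

theorem hasSum_expGenFun_mul_expGenFun {a b : ℕ → 𝕜} {M N : ℝ} (ha : ∀ n, ‖a n‖ ≤ M ^ n)
    (hb : ∀ n, ‖b n‖ ≤ N ^ n) (s t : 𝕜) :
    HasSum (fun p : ℕ × ℕ => s ^ p.1 / p.1 ! * (t ^ p.2 / p.2 !) * (a p.1 * b p.2))
      (expGenFun a s * expGenFun b t) := by
  have h_summable := summable_mul_of_summable_norm
    (summable_norm_pow_div_factorial_mul ha s) (summable_norm_pow_div_factorial_mul hb t)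
  simpa only [mul_mul_mul_comm (_ / _) (_ / _)] using
    (hasSum_expGenFun ha s).mul (hasSum_expGenFun hb t) h_summable

theorem hasSum_integral_expGenFun_mul_expGenFun {X : Type*} [MeasurableSpace X] {μ : Measure X}
    [IsFiniteMeasure μ] {f g : ℕ → X → 𝕜} {M N : ℝ}
    (hf : ∀ n, AEStronglyMeasurable (f n) μ) (hg : ∀ n, AEStronglyMeasurable (g n) μ)
    (hfM : ∀ n x, ‖f n x‖ ≤ M ^ n) (hgN : ∀ n x, ‖g n x‖ ≤ N ^ n) (s t : 𝕜) :
    HasSum (fun p : ℕ × ℕ => s ^ p.1 / p.1 ! * (t ^ p.2 / p.2 !) * ∫ x, f p.1 x * g p.2 x ∂μ)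
      (∫ x, expGenFun (f · x) s * expGenFun (g · x) t ∂μ) := by
  have h_bound (p : ℕ × ℕ) (x : X) :
      ‖s ^ p.1 / p.1 ! * (t ^ p.2 / p.2 !) * (f p.1 x * g p.2 x)‖
        ≤ (‖s‖ * M) ^ p.1 / p.1 ! * ((‖t‖ * N) ^ p.2 / p.2 !) := by
    have h_left := norm_pow_div_factorial_mul_le_s14 (hfM p.1 x) s
    have h_right := norm_pow_div_factorial_mul_le_s14 (hgN p.2 x) t
    rw [mul_mul_mul_comm, norm_mul]
    exact mul_le_mul h_left h_right (norm_nonneg _) ((norm_nonneg _).trans h_left)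
  have h_bound_summable : Summable fun p : ℕ × ℕ =>
      (‖s‖ * M) ^ p.1 / p.1 ! * ((‖t‖ * N) ^ p.2 / p.2 !) :=
    summable_mul_of_summable_norm (Real.summable_pow_div_factorial _).norm
      (Real.summable_pow_div_factorial _).norm
  simp only [← integral_const_mul]
  exact hasSum_integral_of_dominated_convergence _
    (fun p => ((hf p.1).mul (hg p.2)).const_mul _)
    (fun p => .of_forall (h_bound p)) (.of_forall fun _ => h_bound_summable) (integrable_const _)
    (.of_forall fun x => hasSum_expGenFun_mul_expGenFun (hfM · x) (hgN · x) s t)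

end ExponentialGeneratingFunction

theorem hasSum_ite_fst_eq {α β M : Type*} [DecidableEq α] [AddCommMonoid M] [TopologicalSpace M]
    {f : β → M} {S : M} (h : HasSum f S) (a : α) :
    HasSum (fun p : α × β => if p.1 = a then f p.2 else 0) S := by
  rw [← (Prod.mk_right_injective a).hasSum_iff]
  · simpa [Function.comp_def] using h
  · rintro ⟨_, b⟩ hb
    exact if_neg fun h_eq => hb ⟨b, Prod.ext h_eq.symm rfl⟩

theorem hasSum_ite_snd_eq {α β M : Type*} [DecidableEq β] [AddCommMonoid M] [TopologicalSpace M]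
    {f : α → M} {S : M} (h : HasSum f S) (b : β) :
    HasSum (fun p : α × β => if p.2 = b then f p.1 else 0) S :=
  (Equiv.prodComm α β).hasSum_iff.mpr (hasSum_ite_fst_eq h b)

section KernelComposition

variable {𝕜 W X Y Z : Type*} [RCLike 𝕜] [MeasurableSpace X]

/-- The composition of the integral kernels `p` and `q` over the measure `μ`, that is, the kernel of
the product of the associated integral operators. -/
noncomputable def kernelComp (μ : Measure X) (p : W → X → 𝕜) (q : X → Y → 𝕜) (w : W) (y : Y) : 𝕜 :=
  ∫ x, p w x * q x y ∂μ

theorem norm_kernelComp_le {μ : Measure X} [IsFiniteMeasure μ] {p : W → X → 𝕜} {q : X → Y → 𝕜}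
    {w : W} {y : Y} {C D : ℝ} (hp : ∀ x, ‖p w x‖ ≤ C) (hq : ∀ x, ‖q x y‖ ≤ D) :
    ‖kernelComp μ p q w y‖ ≤ C * D * μ.real Set.univ :=
  norm_integral_le_of_norm_le_const <| .of_forall fun x => (norm_mul _ _).trans_le <|
    mul_le_mul (hp x) (hq x) (norm_nonneg _) ((norm_nonneg _).trans (hp x))

variable [MeasurableSpace Y]

theorem kernelComp_assoc_apply {μ : Measure X} {ν : Measure Y} [SFinite μ] [SFinite ν]
    {p : W → X → 𝕜} {q : X → Y → 𝕜} {r : Y → Z → 𝕜} {w : W} {z : Z}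
    (h : Integrable (Function.uncurry fun x y => p w x * q x y * r y z) (μ.prod ν)) :
    kernelComp ν (kernelComp μ p q) r w z = kernelComp μ p (kernelComp ν q r) w z :=
  calc ∫ y, (∫ x, p w x * q x y ∂μ) * r y z ∂ν
    _ = ∫ y, ∫ x, p w x * q x y * r y z ∂μ ∂ν := by simp only [integral_mul_const]
    _ = ∫ x, ∫ y, p w x * q x y * r y z ∂ν ∂μ := (integral_integral_swap h).symm
    _ = ∫ x, p w x * ∫ y, q x y * r y z ∂ν ∂μ := by simp only [mul_assoc, integral_const_mul]

variable [MeasurableSpace W] [MeasurableSpace Z]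

theorem measurable_uncurry_kernelComp {μ : Measure X} [SFinite μ] {p : W → X → 𝕜} {q : X → Y → 𝕜}
    (hp : Measurable (Function.uncurry p)) (hq : Measurable (Function.uncurry q)) :
    Measurable (Function.uncurry (kernelComp μ p q)) := by
  have h_integrand : Measurable fun u : (W × Y) × X => p u.1.1 u.2 * q u.2 u.1.2 :=
    (hp.comp (f := fun u : (W × Y) × X => (u.1.1, u.2)) (by fun_prop)).mul
      (hq.comp (f := fun u : (W × Y) × X => (u.2, u.1.2)) (by fun_prop))
  exact h_integrand.stronglyMeasurable.integral_prod_right'.measurable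

theorem kernelComp_assoc {μ : Measure X} {ν : Measure Y} [IsFiniteMeasure μ] [IsFiniteMeasure ν]
    {p : W → X → 𝕜} {q : X → Y → 𝕜} {r : Y → Z → 𝕜} (hp : Measurable (Function.uncurry p))
    (hq : Measurable (Function.uncurry q)) (hr : Measurable (Function.uncurry r)) {B C D : ℝ}
    (hpB : ∀ w x, ‖p w x‖ ≤ B) (hqC : ∀ x y, ‖q x y‖ ≤ C) (hrD : ∀ y z, ‖r y z‖ ≤ D) :
    kernelComp ν (kernelComp μ p q) r = kernelComp μ p (kernelComp ν q r) := by
  ext w z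
  refine kernelComp_assoc_apply (.of_bound (C := B * C * D) ?_ (.of_forall fun ⟨x, y⟩ => ?_))
  · exact (((hp.of_uncurry_left (x := w)).comp measurable_fst).mul hq).mul
      ((hr.of_uncurry_right (y := z)).comp measurable_snd) |>.aestronglyMeasurable
  · have hB : 0 ≤ B := (norm_nonneg _).trans (hpB w x)
    have hC : 0 ≤ C := (norm_nonneg _).trans (hqC x y)
    simp only [Function.uncurry_apply_pair, norm_mul]
    gcongr
    exacts [hpB w x, hqC x y, hrD y z]

end KernelComposition

section IteratedKernel

instance : IsProbabilityMeasure muI :=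
  inferInstanceAs (IsProbabilityMeasure (volume : Measure unitInterval))

variable {P : I01 → I01 → ℝ} {M : ℝ}

theorem measurable_uncurry_Pit (hP : Measurable (Function.uncurry P)) (n : ℕ) :
    Measurable (Function.uncurry (Pit P n)) := by
  induction n with
  | zero => exact hP
  | succ n ih => exact measurable_uncurry_kernelComp ih hP

theorem norm_Pit_le (hM : ∀ x y, ‖P x y‖ ≤ M) (n : ℕ) (x y : I01) :
    ‖Pit P n x y‖ ≤ M ^ (n + 1) := by
  induction n generalizing y with
  | zero => simpa only [Pit, zero_add, pow_one] using hM x y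
  | succ n ih =>
    simpa only [pow_succ, probReal_univ, mul_one] using!
      norm_kernelComp_le (μ := muI) (w := x) ih (hM · y)

theorem kernelComp_Pit_Pit (hP : Measurable (Function.uncurry P)) (hM : ∀ x y, ‖P x y‖ ≤ M)
    (m n : ℕ) : kernelComp muI (Pit P m) (Pit P n) = Pit P (m + n + 1) := by
  induction n with
  | zero => rfl
  | succ n ih =>
    calc kernelComp muI (Pit P m) (kernelComp muI (Pit P n) P)
      _ = kernelComp muI (kernelComp muI (Pit P m) (Pit P n)) P :=
        (kernelComp_assoc (measurable_uncurry_Pit hP m) (measurable_uncurry_Pit hP n) hP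
          (norm_Pit_le hM m) (norm_Pit_le hM n) hM).symm
      _ = kernelComp muI (Pit P (m + n + 1)) P := by rw [ih]

/-- The iterated kernel `Pⁿ` in the usual numbering (`Pit P n` is `P^{n+1}`), with `P⁰ := 0` because
the identity operator has no kernel. -/
noncomputable def kernelPow (P : I01 → I01 → ℝ) : ℕ → I01 → I01 → ℝ
  | 0 => 0
  | n + 1 => Pit P n

theorem measurable_uncurry_kernelPow (hP : Measurable (Function.uncurry P)) :
    ∀ n, Measurable (Function.uncurry (kernelPow P n))
  | 0 => measurable_const
  | n + 1 => measurable_uncurry_Pit hP n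

theorem norm_kernelPow_le (hM : ∀ x y, ‖P x y‖ ≤ M) :
    ∀ n x y, ‖kernelPow P n x y‖ ≤ M ^ n
  | 0, _, _ => by simp [kernelPow]
  | n + 1, x, y => norm_Pit_le hM n x y

theorem kernelPow_add_apply (hP : Measurable (Function.uncurry P)) (hM : ∀ x y, ‖P x y‖ ≤ M)
    (i j : ℕ) (x y : I01) :
    kernelPow P (i + j) x y = (if i = 0 then kernelPow P j x y else 0)
      + (if j = 0 then kernelPow P i x y else 0)
      + kernelComp muI (kernelPow P i) (kernelPow P j) x y := by
  rcases i with _ | i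
  · rcases j with _ | j <;> simp [kernelPow, kernelComp]
  · rcases j with _ | j
    · simp [kernelPow, kernelComp]
    · rw [show i + 1 + (j + 1) = i + j + 1 + 1 by lia]
      simp [kernelPow, kernelComp_Pit_Pit hP hM]

theorem Qit_eq_sum_antidiagonal (k : ℕ) (x y : I01) :
    Qit P k x y =
      ∑ p ∈ antidiagonal k, (k.choose p.1 : ℝ) * (kernelPow P p.1 x y * (-1) ^ p.2) := by
  rw [Finset.Nat.sum_antidiagonal_eq_sum_range_succ_mk, Nat.range_succ_eq_Icc_zero,
    ← Finset.add_sum_Ioc_eq_sum_Icc k.zero_le, Qit]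
  simp only [kernelPow, Pi.zero_apply, zero_mul, mul_zero, zero_add]
  refine Finset.sum_congr rfl fun j hj => ?_
  obtain ⟨j, rfl⟩ := Nat.exists_eq_add_of_le' (Finset.mem_Icc.mp hj).1
  simp only [Nat.add_sub_cancel]
  ring

theorem Kt_eq_exp_neg_mul_expGenFun (hM : ∀ x y, ‖P x y‖ ≤ M) (t : ℝ) (x y : I01) :
    Kt P t x y = Real.exp (-t) * expGenFun (kernelPow P · x y) t := by
  have h_exp : expGenFun (fun n => (-1 : ℝ) ^ n) t = Real.exp (-t) := by
    simp only [expGenFun, Real.exp_eq_exp_ℝ, NormedSpace.exp_eq_tsum_div, neg_pow t]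
    exact tsum_congr fun n => by ring
  rw [← h_exp, mul_comm, expGenFun_mul
    (summable_norm_pow_div_factorial_mul (norm_kernelPow_le hM · x y) t)
    (summable_norm_pow_div_factorial_mul (M := 1) (by simp) t)]
  simp only [← Qit_eq_sum_antidiagonal]
  rfl

theorem expGenFun_kernelPow_add (hP : Measurable (Function.uncurry P)) (hM : ∀ x y, ‖P x y‖ ≤ M)
    (s t : ℝ) (x y : I01) :
    expGenFun (kernelPow P · x y) (t + s) =
      expGenFun (kernelPow P · x y) s + expGenFun (kernelPow P · x y) t
        + ∫ z, expGenFun (kernelPow P · x z) t * expGenFun (kernelPow P · z y) s ∂muI := by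
  have h_fst_axis := hasSum_ite_fst_eq (hasSum_expGenFun (norm_kernelPow_le hM · x y) s) (0 : ℕ)
  have h_snd_axis := hasSum_ite_snd_eq (hasSum_expGenFun (norm_kernelPow_le hM · x y) t) (0 : ℕ)
  have h_integral := hasSum_integral_expGenFun_mul_expGenFun (μ := muI)
    (fun n => (measurable_uncurry_kernelPow hP n).of_uncurry_left (x := x) |>.aestronglyMeasurable)
    (fun n => (measurable_uncurry_kernelPow hP n).of_uncurry_right (y := y) |>.aestronglyMeasurable)
    (norm_kernelPow_le hM · x ·) (norm_kernelPow_le hM · · y) t s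
  refine expGenFun_add_of_hasSum ?_
  convert (h_fst_axis.add h_snd_axis).add h_integral using 2 with p
  rw [kernelPow_add_apply hP hM, kernelComp, mul_add, mul_add]
  congr 2 <;> split_ifs with h <;> simp [h]

end IteratedKernel

theorem Kt_chapman_kolmogorov_general {P : I01 → I01 → ℝ} (hP : Measurable (Function.uncurry P))
    {M : ℝ} (hM : ∀ x y, ‖P x y‖ ≤ M) (s t : ℝ) (x y : I01) :
    Kt P (s + t) x y
      = Real.exp (-t) * Kt P s x y + Real.exp (-s) * Kt P t x y
        + ∫ z, Kt P t x z * Kt P s z y ∂muI := by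
  simp only [Kt_eq_exp_neg_mul_expGenFun hM, mul_mul_mul_comm, integral_const_mul]
  rw [add_comm s t, expGenFun_kernelPow_add hP hM, neg_add, Real.exp_add]
  ring

/-- Appendix 1 of the paper: the Chapman–Kolmogorov-type relation
`K_{s+t}(x,y) = e^{−t}·K_s(x,y) + e^{−s}·K_t(x,y) + ∫₀¹ K_t(x,z)·K_s(z,y) dz`. -/
theorem Kt_chapman_kolmogorov
    (P : I01 → I01 → ℝ) (hP : Continuous fun p : I01 × I01 => P p.1 p.2)
    (s t : ℝ) (hs : 0 ≤ s) (ht : 0 ≤ t) (x y : I01) :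
    Kt P (s + t) x y
      = Real.exp (-t) * Kt P s x y + Real.exp (-s) * Kt P t x y
        + ∫ z, Kt P t x z * Kt P s z y ∂muI :=
  Kt_chapman_kolmogorov_general hP.measurable
    (fun x y => (⟨_, hP⟩ : C(I01 × I01, ℝ)).norm_coe_le_norm (x, y)) s t x y
end
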